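/- arXiv:1912.07194 — 2 statements merged into one kernel-verified Lean document; each statement's English description precedes it below -/
import Mathlib

section
/- Let f: ℂ^{n×n} → ℝ be real analytic as a function of the real and imaginary parts of the matrix entries. Then every U ∈ U(n) satisfies a Łojasiewicz inequality for the projected gradient: there exist δ > 0, σ > 0 and ζ ∈ (0, 1/2] such that for all U' ∈ U(n) with ‖U' − U‖ < δ, it holds that |f(U') − f(U)|^{1−ζ} ≤ σ ‖ProjGrad f(U')‖. -/
open Matrix BigOperators Filter

/-- Frobenius norm of a complex matrix. -/
noncomputable def frobC {n : ℕ} (A : Matrix (Fin n) (Fin n) ℂ) : ℝ :=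
  Real.sqrt (∑ i, ∑ j, Complex.normSq (A i j))

/-- `g` is the Euclidean gradient of `f : ℂ^{n×n} → ℝ` with respect to the real
inner product `⟨A,B⟩ = Re tr(Aᴴ B)`: the derivative of `f` at `U` in a real direction
`t ↦ U + t H` equals `Re tr((g U)ᴴ H) = ∑ᵢⱼ Re(conj((g U)ᵢⱼ) Hᵢⱼ)`. -/
def IsGradC {n : ℕ} (f : Matrix (Fin n) (Fin n) ℂ → ℝ)
    (g : Matrix (Fin n) (Fin n) ℂ → Matrix (Fin n) (Fin n) ℂ) : Prop :=
  ∀ U H, HasDerivAt (fun t : ℝ => f (U + t • H))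
    (∑ i, ∑ j, ((starRingEnd ℂ) (g U i j) * H i j).re) 0

/-- Riemannian (projected) gradient on U(n): `U (Λ - Λᴴ)/2` with `Λ = Uᴴ ∇f(U)`. -/
noncomputable def projGradC {n : ℕ}
    (g : Matrix (Fin n) (Fin n) ℂ → Matrix (Fin n) (Fin n) ℂ)
    (U : Matrix (Fin n) (Fin n) ℂ) : Matrix (Fin n) (Fin n) ℂ :=
  U * ((1 / 2 : ℂ) • (Uᴴ * g U - (Uᴴ * g U)ᴴ))

/-!
A finite union of sets satisfies a Łojasiewicz inequality as soon as each of them does, so by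
compactness of the space of ultrafilters it suffices to prove the gradient inequality along each
ultrafilter converging to the given point. There local uniformization applies: by induction on the
number of variables and on the order of vanishing in the last one, Tschirnhaus shears, ramified
coverings and blow-ups, each lifting the ultrafilter to a single chart, turn an analytic germ `F`
into a monomial times a unit. For `x ^ α * u(x)` the inequality follows from the Euler fields
`x i * ∂/∂x i`, and it descends along an analytic map by the chain rule.

The Cayley transform of the skew-Hermitian part is an analytic map onto a neighbourhood of `U` in
the unitary group. Its derivative takes values in the tangent spaces `W * 𝔲(n)`, on which the
gradient and its projection induce the same linear form; Cauchy–Schwarz then bounds the derivative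
of `f` along the chart by the norm of the projected gradient.
-/

open scoped Topology ContDiff

section Germs

theorem eventually_eq_zero_or_eventually_eq_zero_of_mul {E : Type*} [NormedAddCommGroup E]
    [NormedSpace ℝ E] {f g : E → ℝ} {x₀ : E} (hf : AnalyticAt ℝ f x₀) (hg : AnalyticAt ℝ g x₀)
    (h : ∀ᶠ x in 𝓝 x₀, f x * g x = 0) :
    (∀ᶠ x in 𝓝 x₀, f x = 0) ∨ ∀ᶠ x in 𝓝 x₀, g x = 0 := by
  obtain ⟨r, hr, hball⟩ := Metric.eventually_nhds_iff_ball.1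
    (hf.eventually_analyticAt.and (hg.eventually_analyticAt.and h))
  by_cases hz : ∀ x ∈ Metric.ball x₀ r, f x = 0
  · exact .inl (Metric.eventually_nhds_iff_ball.2 ⟨r, hr, hz⟩)
  · right
    push Not at hz
    obtain ⟨x, hx, hfx⟩ := hz
    have hgan : AnalyticOnNhd ℝ g (Metric.ball x₀ r) := fun y hy => (hball y hy).2.1
    have hev : g =ᶠ[𝓝 x] 0 := by
      filter_upwards [(hball x hx).1.continuousAt.eventually_ne hfx,
        Metric.isOpen_ball.mem_nhds hx] with y hfy hy
      exact (mul_eq_zero.1 (hball y hy).2.2).resolve_left hfy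
    have hzero := hgan.eqOn_zero_of_preconnected_of_eventuallyEq_zero
      (convex_ball x₀ r).isPreconnected hx hev
    exact Metric.eventually_nhds_iff_ball.2 ⟨r, hr, fun y hy => hzero hy⟩

theorem eventually_eq_of_mul_left_eq {E : Type*} [NormedAddCommGroup E] [NormedSpace ℝ E]
    {f a b : E → ℝ} {x₀ : E} (hf : AnalyticAt ℝ f x₀) (ha : AnalyticAt ℝ a x₀)
    (hb : AnalyticAt ℝ b x₀) (hf0 : ¬ ∀ᶠ x in 𝓝 x₀, f x = 0)
    (h : ∀ᶠ x in 𝓝 x₀, f x * a x = f x * b x) : ∀ᶠ x in 𝓝 x₀, a x = b x := by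
  have hmul : ∀ᶠ x in 𝓝 x₀, f x * (a - b) x = 0 := by
    filter_upwards [h] with x hx
    rw [Pi.sub_apply, mul_sub, hx, sub_self]
  filter_upwards [(eventually_eq_zero_or_eventually_eq_zero_of_mul hf (ha.sub hb)
    hmul).resolve_left hf0] with x hx
  exact sub_eq_zero.1 hx

theorem not_eventually_prod_eq_zero {E κ : Type*} [NormedAddCommGroup E] [NormedSpace ℝ E]
    {x₀ : E} (s : Finset κ) {f : κ → E → ℝ} (hf : ∀ k ∈ s, AnalyticAt ℝ (f k) x₀)
    (h0 : ∀ k ∈ s, ¬ ∀ᶠ x in 𝓝 x₀, f k x = 0) : ¬ ∀ᶠ x in 𝓝 x₀, ∏ k ∈ s, f k x = 0 := by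
  classical
  induction s using Finset.induction_on with
  | empty => simpa using NeBot.ne inferInstance
  | insert a s ha ih =>
    simp only [Finset.forall_mem_insert] at hf h0
    simp only [Finset.prod_insert ha]
    intro h
    rcases eventually_eq_zero_or_eventually_eq_zero_of_mul hf.1
      (Finset.analyticAt_fun_prod _ hf.2) h with h | h
    · exact h0.1 h
    · exact ih hf.2 h0.2 h

end Germs

section Division

variable {𝕜 E F : Type*} [NontriviallyNormedField 𝕜] [NormedAddCommGroup E] [NormedSpace 𝕜 E]
  [NormedAddCommGroup F] [NormedSpace 𝕜 F]

/-- The series of the quotient `(f x - f (P x)) / c` when `p` is the Taylor series of `f` and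
`x - P x = c • e`: the `k`-th term comes from telescoping `p (k + 1)` from `x` to `P x` one slot
at a time, and evaluating the slot being changed at `e`. -/
noncomputable def quotientSeries (p : FormalMultilinearSeries 𝕜 E F) (P : E →L[𝕜] E) (e : E) :
    FormalMultilinearSeries 𝕜 E F := fun k =>
  ∑ i : Fin (k + 1), ((p (k + 1)).curryMid i e).compContinuousLinearMap
    fun j : Fin k => if j.castSucc < i then ContinuousLinearMap.id 𝕜 E else P

theorem norm_quotientSeries_le (p : FormalMultilinearSeries 𝕜 E F) (P : E →L[𝕜] E) (e : E)
    (k : ℕ) :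
    ‖quotientSeries p P e k‖ ≤ (k + 1) * (‖p (k + 1)‖ * ‖e‖ * max 1 ‖P‖ ^ k) := by
  have hterm : ∀ i ∈ (Finset.univ : Finset (Fin (k + 1))),
      ‖((p (k + 1)).curryMid i e).compContinuousLinearMap
        (fun j : Fin k => if j.castSucc < i then ContinuousLinearMap.id 𝕜 E else P)‖
        ≤ ‖p (k + 1)‖ * ‖e‖ * max 1 ‖P‖ ^ k := fun i _ => by
    refine (ContinuousMultilinearMap.norm_compContinuousLinearMap_le _ _).trans ?_
    gcongr
    · simpa only [ContinuousMultilinearMap.norm_curryMid] using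
        ((p (k + 1)).curryMid i).le_opNorm e
    · refine (Finset.prod_le_prod (g := fun _ => max 1 ‖P‖) (fun _ _ => norm_nonneg _)
        fun j _ => ?_).trans_eq (by simp)
      split_ifs
      · exact ContinuousLinearMap.norm_id_le.trans (le_max_left _ _)
      · exact le_max_right _ _
  refine ((norm_sum_le _ _).trans (Finset.sum_le_sum hterm)).trans_eq ?_
  simp

theorem smul_quotientSeries_apply (p : FormalMultilinearSeries 𝕜 E F) {P : E →L[𝕜] E} {e x : E}
    {c : 𝕜} (hx : x - P x = c • e) (k : ℕ) :
    c • quotientSeries p P e k (fun _ => x) =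
      (p (k + 1) fun _ => x) - p (k + 1) fun _ => P x := by
  have htelescope := (p (k + 1)).toMultilinearMap.map_piecewise_sub_map_piecewise
    (fun _ => x) (fun _ => P x) (fun _ => 0) Finset.univ
  simp only [Finset.piecewise_univ, ContinuousMultilinearMap.coe_coe, Finset.mem_univ,
    if_true] at htelescope
  rw [htelescope, quotientSeries, _root_.sum_apply, Finset.smul_sum]
  refine Finset.sum_congr rfl fun i _ => ?_
  rw [ContinuousMultilinearMap.compContinuousLinearMap_apply,
    ContinuousMultilinearMap.curryMid_apply]
  refine ((p (k + 1)).toMultilinearMap.map_insertNth_smul i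
    (fun j : Fin k => (if j.castSucc < i then ContinuousLinearMap.id 𝕜 E else P) x) c e).symm.trans
    (congrArg (p (k + 1)) ?_)
  refine (Fin.eq_insertNth_iff.2 ⟨by simp [hx], funext fun j => ?_⟩).symm
  by_cases hj : j.castSucc < i
  · simp [Fin.removeNth, hj, Fin.succAbove_of_castSucc_lt _ _ hj]
  · have hle : i ≤ j.castSucc := not_lt.1 hj
    simp [Fin.removeNth, hj, Fin.succAbove_of_le_castSucc _ _ hle,
      (Fin.le_castSucc_iff.1 hle).ne', (Fin.le_castSucc_iff.1 hle).le.not_gt]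

theorem quotientSeries_radius_pos {p : FormalMultilinearSeries 𝕜 E F} (hp : 0 < p.radius)
    (P : E →L[𝕜] E) (e : E) : 0 < (quotientSeries p P e).radius := by
  obtain ⟨C, a, -, ha, hCa⟩ := p.le_mul_pow_of_radius_pos hp
  have hbound : ∀ k, ‖quotientSeries p P e k‖ ≤ C * a * ‖e‖ * (2 * a * max 1 ‖P‖) ^ k := fun k => by
    have hk : (k : ℝ) + 1 ≤ 2 ^ k := by exact_mod_cast Nat.lt_two_pow_self
    calc ‖quotientSeries p P e k‖ ≤ (k + 1) * (‖p (k + 1)‖ * ‖e‖ * max 1 ‖P‖ ^ k) :=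
          norm_quotientSeries_le p P e k
      _ ≤ 2 ^ k * (C * a ^ (k + 1) * ‖e‖ * max 1 ‖P‖ ^ k) := by gcongr; exact hCa _
      _ = C * a * ‖e‖ * (2 * a * max 1 ‖P‖) ^ k := by rw [mul_pow, mul_pow]; ring
  have hpos : 0 < 2 * a * max 1 ‖P‖ := by positivity
  let ρ : NNReal := ⟨(2 * a * max 1 ‖P‖)⁻¹, by positivity⟩
  refine lt_of_lt_of_le (ENNReal.coe_pos.2 (show 0 < ρ from inv_pos.2 hpos))
    ((quotientSeries p P e).le_radius_of_bound (C * a * ‖e‖) fun k => ?_)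
  calc ‖quotientSeries p P e k‖ * (2 * a * max 1 ‖P‖)⁻¹ ^ k
      ≤ C * a * ‖e‖ * (2 * a * max 1 ‖P‖) ^ k * (2 * a * max 1 ‖P‖)⁻¹ ^ k := by
        gcongr; exact hbound k
    _ = C * a * ‖e‖ := by
        rw [mul_assoc, ← mul_pow, mul_inv_cancel₀ hpos.ne', one_pow, mul_one]

theorem exists_analyticAt_eq_add_smul [CompleteSpace F] {f : E → F} (hf : AnalyticAt 𝕜 f 0)
    (l : E →L[𝕜] 𝕜) (e : E) :
    ∃ h : E → F, AnalyticAt 𝕜 h 0 ∧ ∀ᶠ x in 𝓝 0, f x = f (x - l x • e) + l x • h x := by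
  obtain ⟨p, r, hp⟩ := hf
  set P : E →L[𝕜] E := ContinuousLinearMap.id 𝕜 E - l.smulRight e
  have hPx : ∀ x, x - P x = l x • e := fun x => sub_sub_cancel _ _
  have hq := (quotientSeries p P e).hasFPowerSeriesOnBall
    (quotientSeries_radius_pos (hp.r_pos.trans_le hp.r_le) P e)
  have hf_sum : ∀ᶠ x in 𝓝 (0 : E), HasSum (fun n => p n fun _ => x) (f x) := by
    simpa using hp.eventually_hasSum
  have hP_sum : ∀ᶠ x in 𝓝 (0 : E), HasSum (fun n => p n fun _ => P x) (f (P x)) :=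
    (show Tendsto P (𝓝 0) (𝓝 0) by simpa using P.continuous.tendsto 0).eventually hf_sum
  have hq_sum : ∀ᶠ x in 𝓝 (0 : E), HasSum (fun n => quotientSeries p P e n fun _ => x)
      ((quotientSeries p P e).sum x) := by
    simpa using hq.eventually_hasSum
  refine ⟨(quotientSeries p P e).sum, ⟨_, _, hq⟩, ?_⟩
  filter_upwards [hf_sum, hP_sum, hq_sum] with x hfx hPfx hqx
  have hdiff := (hasSum_nat_add_iff' 1).2 (hfx.sub hPfx)
  have hconst : ((p 0 fun _ => x) - p 0 fun _ => P x) = 0 :=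
    sub_eq_zero.2 (congrArg (p 0) (Subsingleton.elim _ _))
  simp only [← smul_quotientSeries_apply p (hPx x), Finset.range_one, Finset.sum_singleton,
    hconst, sub_zero] at hdiff
  have hfP : f x - f (P x) = l x • (quotientSeries p P e).sum x :=
    hdiff.unique (hqx.const_smul (l x))
  rw [← hfP, show x - l x • e = P x from rfl, add_sub_cancel]

theorem exists_analyticAt_eq_add_coord_smul {ι : Type*} [Fintype ι] [DecidableEq ι]
    [CompleteSpace F] {f : (ι → 𝕜) → F} (hf : AnalyticAt 𝕜 f 0) (i : ι) :
    ∃ h : (ι → 𝕜) → F, AnalyticAt 𝕜 h 0 ∧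
      ∀ᶠ x in 𝓝 0, f x = f (Function.update x i 0) + x i • h x := by
  obtain ⟨h, hh, heq⟩ := exists_analyticAt_eq_add_smul hf
    (ContinuousLinearMap.proj (R := 𝕜) (φ := fun _ => 𝕜) i) (Pi.single i 1)
  refine ⟨h, hh, heq.mono fun x hx => hx.trans ?_⟩
  have hupdate : x - x i • Pi.single i (1 : 𝕜) = Function.update x i 0 := by
    ext j
    rcases eq_or_ne j i with rfl | hj <;> simp [*]
  simp only [ContinuousLinearMap.proj_apply, hupdate]

end Division

section NormalCrossing

theorem not_eventually_coord_eq_zero {ι : Type*} (i : ι) :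
    ¬ ∀ᶠ x in 𝓝 (0 : ι → ℝ), x i = 0 := by
  classical
  intro h
  have hlim : Tendsto (fun t : ℝ => Pi.single (M := fun _ : ι => ℝ) i t) (𝓝 0) (𝓝 0) := by
    simpa using (continuous_single (A := fun _ : ι => ℝ) i).tendsto 0
  have hline : ∀ᶠ t : ℝ in 𝓝[≠] 0, t = 0 :=
    ((hlim.eventually h).mono fun t ht => by simpa using ht).filter_mono nhdsWithin_le_nhds
  obtain ⟨t, ht, hne⟩ := (hline.and self_mem_nhdsWithin).exists
  exact hne ht

variable {ι κ : Type*} [Fintype ι]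

/-- Near `0`, the germ `f` is the monomial with exponents `α` times an analytic unit. -/
def HasExponent (f : (ι → ℝ) → ℝ) (α : ι → ℕ) : Prop :=
  ∃ u : (ι → ℝ) → ℝ, AnalyticAt ℝ u 0 ∧ u 0 ≠ 0 ∧ ∀ᶠ x in 𝓝 0, f x = (∏ i, x i ^ α i) * u x

/-- The germ of `f` at `0` is a monomial times a unit, i.e. its zero set has normal crossings with
respect to the coordinates. -/
def IsNormalCrossing (f : (ι → ℝ) → ℝ) : Prop :=
  ∃ α, HasExponent f α

theorem analyticAt_coord (i : ι) (x₀ : ι → ℝ) : AnalyticAt ℝ (fun x : ι → ℝ => x i) x₀ :=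
  (ContinuousLinearMap.proj (R := ℝ) (φ := fun _ : ι => ℝ) i).analyticAt x₀

theorem analyticAt_prod_pow (α : ι → ℕ) (x₀ : ι → ℝ) :
    AnalyticAt ℝ (fun x : ι → ℝ => ∏ i, x i ^ α i) x₀ :=
  Finset.analyticAt_fun_prod _ fun i _ => (analyticAt_coord i x₀).pow _

namespace HasExponent

variable {f g : (ι → ℝ) → ℝ} {α β : ι → ℕ}

theorem congr (hf : HasExponent f α) (hfg : ∀ᶠ x in 𝓝 0, g x = f x) : HasExponent g α := by
  obtain ⟨u, hu, hu0, heq⟩ := hf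
  exact ⟨u, hu, hu0, (hfg.and heq).mono fun x hx => hx.1.trans hx.2⟩

theorem of_ne_zero (hf : AnalyticAt ℝ f 0) (h0 : f 0 ≠ 0) : HasExponent f 0 :=
  ⟨f, hf, h0, by simp⟩

theorem prod_pow (α : ι → ℕ) : HasExponent (fun x => ∏ i, x i ^ α i) α :=
  ⟨fun _ => 1, analyticAt_const, one_ne_zero, by simp⟩

theorem coord [DecidableEq ι] (i : ι) : HasExponent (fun x => x i) (Pi.single i 1) :=
  (prod_pow (Pi.single i 1)).congr <| .of_forall fun x => by
    simp [Pi.single_apply]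

theorem mul (hf : HasExponent f α) (hg : HasExponent g β) :
    HasExponent (fun x => f x * g x) (α + β) := by
  obtain ⟨u, hu, hu0, hf⟩ := hf
  obtain ⟨v, hv, hv0, hg⟩ := hg
  refine ⟨fun x => u x * v x, hu.mul hv, mul_ne_zero hu0 hv0, ?_⟩
  filter_upwards [hf, hg] with x hfx hgx
  simp only [hfx, hgx, Pi.add_apply, pow_add, Finset.prod_mul_distrib]
  ring

theorem pow (hf : HasExponent f α) (k : ℕ) : HasExponent (fun x => f x ^ k) (k • α) := by
  induction k with
  | zero => simpa using of_ne_zero analyticAt_const one_ne_zero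
  | succ k ih => simpa only [pow_succ, succ_nsmul] using ih.mul hf

theorem prod {s : Finset κ} {f : κ → (ι → ℝ) → ℝ} {α : κ → ι → ℕ}
    (hf : ∀ k ∈ s, HasExponent (f k) (α k)) :
    HasExponent (fun x => ∏ k ∈ s, f k x) (∑ k ∈ s, α k) := by
  classical
  induction s using Finset.induction_on with
  | empty => simpa using of_ne_zero analyticAt_const one_ne_zero
  | insert a s ha ih =>
    simp only [Finset.forall_mem_insert] at hf
    simpa only [Finset.prod_insert ha, Finset.sum_insert ha] using hf.1.mul (ih hf.2)

theorem comp [Fintype κ] {π : (κ → ℝ) → ι → ℝ} {β : ι → κ → ℕ} (hf : HasExponent f α)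
    (hπ : AnalyticAt ℝ π 0) (h0 : π 0 = 0) (hβ : ∀ i, HasExponent (fun x => π x i) (β i)) :
    HasExponent (fun x => f (π x)) (∑ i, α i • β i) := by
  obtain ⟨u, hu, hu0, hf⟩ := hf
  rw [← h0] at hu hu0 hf
  have hunit : HasExponent (fun x => u (π x)) 0 := of_ne_zero (hu.comp hπ) hu0
  simpa only [add_zero] using ((prod (s := Finset.univ) fun i _ => (hβ i).pow (α i)).mul
    hunit).congr (hπ.continuousAt.eventually hf)

theorem eventually_eq_pow_mul {m : ℕ} (hf : HasExponent f (m • α)) :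
    ∃ u : (ι → ℝ) → ℝ, AnalyticAt ℝ u 0 ∧ u 0 ≠ 0 ∧
      ∀ᶠ x in 𝓝 0, f x = (∏ i, x i ^ α i) ^ m * u x := by
  obtain ⟨u, hu, hu0, hf⟩ := hf
  refine ⟨u, hu, hu0, hf.mono fun x hx => ?_⟩
  simp only [hx, Pi.smul_apply, smul_eq_mul, ← Finset.prod_pow, ← pow_mul, mul_comm m]

end HasExponent

namespace IsNormalCrossing

variable {f g : (ι → ℝ) → ℝ}

theorem analyticAt (hf : IsNormalCrossing f) : AnalyticAt ℝ f 0 := by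
  obtain ⟨α, u, hu, -, hf⟩ := hf
  exact ((analyticAt_prod_pow α 0).mul hu).congr (hf.mono fun x hx => hx.symm)

theorem congr (hf : IsNormalCrossing f) (hfg : ∀ᶠ x in 𝓝 0, g x = f x) : IsNormalCrossing g :=
  hf.imp fun _ hα => hα.congr hfg

theorem of_ne_zero (hf : AnalyticAt ℝ f 0) (h0 : f 0 ≠ 0) : IsNormalCrossing f :=
  ⟨0, .of_ne_zero hf h0⟩

theorem coord (i : ι) : IsNormalCrossing fun x : ι → ℝ => x i := by
  classical
  exact ⟨_, .coord i⟩

theorem mul (hf : IsNormalCrossing f) (hg : IsNormalCrossing g) :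
    IsNormalCrossing fun x => f x * g x := by
  obtain ⟨α, hα⟩ := hf
  obtain ⟨β, hβ⟩ := hg
  exact ⟨_, hα.mul hβ⟩

theorem pow (hf : IsNormalCrossing f) (k : ℕ) : IsNormalCrossing fun x => f x ^ k :=
  hf.elim fun _ hα => ⟨_, hα.pow k⟩

theorem comp [Fintype κ] {π : (κ → ℝ) → ι → ℝ} (hf : IsNormalCrossing f)
    (hπ : AnalyticAt ℝ π 0) (h0 : π 0 = 0) (hcoord : ∀ i, IsNormalCrossing fun x => π x i) :
    IsNormalCrossing fun x => f (π x) := by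
  choose β hβ using hcoord
  exact hf.elim fun _ hα => ⟨_, hα.comp hπ h0 hβ⟩

theorem not_eventually_eq_zero (hf : IsNormalCrossing f) : ¬ ∀ᶠ x in 𝓝 0, f x = 0 := by
  obtain ⟨α, u, hu, hu0, hf⟩ := hf
  intro h
  refine not_eventually_prod_eq_zero (x₀ := (0 : ι → ℝ)) Finset.univ
    (f := fun i x => x i ^ α i) (fun i _ => (analyticAt_coord i 0).pow _) (fun i _ hi => ?_) ?_
  · exact not_eventually_coord_eq_zero i (hi.mono fun x => eq_zero_of_pow_eq_zero)
  · filter_upwards [h, hf, hu.continuousAt.eventually_ne hu0] with x hx hfx hux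
    exact (mul_eq_zero.1 (hfx.symm.trans hx)).resolve_right hux

end IsNormalCrossing

theorem exists_eq_coord_mul_of_update_eq_zero [DecidableEq ι] {f : (ι → ℝ) → ℝ} {i : ι}
    (hf : AnalyticAt ℝ f 0) (h : ∀ᶠ x in 𝓝 0, f (Function.update x i 0) = 0) :
    ∃ f' : (ι → ℝ) → ℝ, AnalyticAt ℝ f' 0 ∧ ∀ᶠ x in 𝓝 0, f x = x i * f' x := by
  obtain ⟨f', hf', heq⟩ := exists_analyticAt_eq_add_coord_smul hf i
  refine ⟨f', hf', (heq.and h).mono fun x hx => ?_⟩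
  rw [hx.1, hx.2, zero_add, smul_eq_mul]

theorem analyticAt_update_zero [DecidableEq ι] (i : ι) (x₀ : ι → ℝ) :
    AnalyticAt ℝ (fun x : ι → ℝ => Function.update x i 0) x₀ := by
  refine analyticAt_pi_iff.2 fun j => ?_
  rcases eq_or_ne j i with rfl | hj
  · simpa only [Function.update_self] using analyticAt_const
  · simpa only [Function.update_of_ne hj] using analyticAt_coord j x₀

theorem exists_eq_coord_mul_or_of_mul_eq {f g h : (ι → ℝ) → ℝ} {i : ι}
    (hf : AnalyticAt ℝ f 0) (hg : AnalyticAt ℝ g 0)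
    (hmul : ∀ᶠ x in 𝓝 0, f x * g x = x i * h x) :
    (∃ f' : (ι → ℝ) → ℝ, AnalyticAt ℝ f' 0 ∧ ∀ᶠ x in 𝓝 0, f x = x i * f' x) ∨
      ∃ g' : (ι → ℝ) → ℝ, AnalyticAt ℝ g' 0 ∧ ∀ᶠ x in 𝓝 0, g x = x i * g' x := by
  classical
  have hres := analyticAt_update_zero i (0 : ι → ℝ)
  have h0 : Function.update (0 : ι → ℝ) i 0 = 0 := Function.update_eq_self i (0 : ι → ℝ)
  have hzero : ∀ᶠ x in 𝓝 (0 : ι → ℝ),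
      f (Function.update x i 0) * g (Function.update x i 0) = 0 := by
    rw [← h0] at hmul
    simpa using hres.continuousAt.eventually hmul
  exact (eventually_eq_zero_or_eventually_eq_zero_of_mul (hf.comp_of_eq hres h0)
    (hg.comp_of_eq hres h0) hzero).imp (exists_eq_coord_mul_of_update_eq_zero hf)
    (exists_eq_coord_mul_of_update_eq_zero hg)

theorem natPi_induction {ι : Type*} [Finite ι] [DecidableEq ι] {P : (ι → ℕ) → Prop} (zero : P 0)
    (add_single : ∀ α i, P α → P (α + Pi.single i 1)) (α : ι → ℕ) : P α := by
  have := Fintype.ofFinite ι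
  induction hN : ∑ i, α i generalizing α with
  | zero =>
    obtain rfl : α = 0 := funext <| by simpa using hN
    exact zero
  | succ N ih =>
    obtain ⟨i, -, hi⟩ := Finset.exists_ne_zero_of_sum_ne_zero (hN.trans_ne N.succ_ne_zero)
    have hα : α - Pi.single i 1 + Pi.single i 1 = α :=
      tsub_add_cancel_of_le (fun j => by
        rcases eq_or_ne j i with rfl | hj <;> simp [*, Nat.one_le_iff_ne_zero])
    rw [← hα] at hN ⊢
    simp only [Pi.add_apply, Finset.sum_add_distrib, Finset.sum_pi_single', Finset.mem_univ,
      if_true, Nat.add_right_cancel_iff] at hN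
    exact add_single _ _ (ih _ hN)

theorem HasExponent.isNormalCrossing_of_mul {α : ι → ℕ} :
    ∀ {f g : (ι → ℝ) → ℝ}, AnalyticAt ℝ f 0 → AnalyticAt ℝ g 0 →
      HasExponent (fun x => f x * g x) α → IsNormalCrossing f ∧ IsNormalCrossing g := by
  classical
  induction α using natPi_induction with
  | zero =>
    rintro f g hf hg ⟨u, -, hu0, hfg⟩
    have h0 : f 0 * g 0 = u 0 := by simpa using hfg.self_of_nhds
    rw [← h0] at hu0
    exact ⟨.of_ne_zero hf (left_ne_zero_of_mul hu0), .of_ne_zero hg (right_ne_zero_of_mul hu0)⟩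
  | add_single α i ih =>
    rintro f g hf hg ⟨u, hu, hu0, hfg⟩
    have hfg' : ∀ᶠ x in 𝓝 0, f x * g x = x i * ((∏ j, x j ^ α j) * u x) := by
      filter_upwards [hfg] with x hx
      rw [hx]
      simp only [Pi.add_apply, pow_add, Finset.prod_mul_distrib, Pi.single_apply, pow_ite, pow_one,
        pow_zero, Finset.prod_ite_eq', Finset.mem_univ, if_true]
      ring
    have hcancel : ∀ {f g f' : (ι → ℝ) → ℝ}, AnalyticAt ℝ f' 0 → AnalyticAt ℝ g 0 →
        (∀ᶠ x in 𝓝 0, f x * g x = x i * ((∏ j, x j ^ α j) * u x)) →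
        (∀ᶠ x in 𝓝 0, f x = x i * f' x) → IsNormalCrossing f ∧ IsNormalCrossing g := by
      intro f g f' hf' hg hfg hff'
      have hf'g : ∀ᶠ x in 𝓝 0, f' x * g x = (∏ j, x j ^ α j) * u x :=
        eventually_eq_of_mul_left_eq (analyticAt_coord i 0) (hf'.mul hg)
          ((analyticAt_prod_pow α 0).mul hu) (not_eventually_coord_eq_zero i) <| by
          filter_upwards [hfg, hff'] with x hx hfx
          rw [← hx, hfx, mul_assoc]
      exact (ih hf' hg ⟨u, hu, hu0, hf'g⟩).imp_left fun h =>
        ((IsNormalCrossing.coord i).mul h).congr hff'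
    rcases exists_eq_coord_mul_or_of_mul_eq hf hg hfg' with ⟨f', hf', hff'⟩ | ⟨g', hg', hgg'⟩
    · exact hcancel hf' hg hfg' hff'
    · exact (hcancel hg' hf (hfg'.mono fun x hx => (mul_comm _ _).trans hx) hgg').symm

theorem IsNormalCrossing.of_prod {s : Finset κ} {f : κ → (ι → ℝ) → ℝ}
    (hf : ∀ k ∈ s, AnalyticAt ℝ (f k) 0) (h : IsNormalCrossing fun x => ∏ k ∈ s, f k x) :
    ∀ k ∈ s, IsNormalCrossing (f k) := by
  classical
  intro k hk
  obtain ⟨α, hα⟩ := h.congr (.of_forall fun x => Finset.mul_prod_erase s (fun j => f j x) hk)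
  exact (hα.isNormalCrossing_of_mul (hf k hk) (Finset.analyticAt_fun_prod _ fun j hj =>
    hf j (Finset.mem_of_mem_erase hj))).1

end NormalCrossing

section Asymptotics

theorem exists_tendsto_div_of_isBigO {α : Type*} {𝓤 : Ultrafilter α} {f g : α → ℝ}
    (h : f =O[𝓤] g) : ∃ c, Tendsto (fun x => f x / g x) 𝓤 (𝓝 c) := by
  obtain ⟨C, hC⟩ := Asymptotics.div_isBoundedUnder_of_isBigO h
  obtain ⟨c, -, hc⟩ := (isCompact_closedBall (0 : ℝ) C).ultrafilter_le_nhds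
    (𝓤.map fun x => f x / g x) <| le_principal_iff.2 <|
      (eventually_map.1 hC).mono fun x hx => mem_closedBall_zero_iff.2 hx
  exact ⟨c, hc⟩

theorem isBigO_or_isBigO_of_ultrafilter {α : Type*} (𝓤 : Ultrafilter α) (f g : α → ℝ) :
    f =O[𝓤] g ∨ g =O[𝓤] f := by
  rcases 𝓤.em fun x => ‖f x‖ ≤ ‖g x‖ with h | h
  · exact .inl (.of_bound 1 (by simpa using h))
  · exact .inr (.of_bound 1 (h.mono fun x hx => by simpa using (not_le.1 hx).le))

end Asymptotics

section Lift

variable {ι κ μ : Type*} [Fintype ι] [Fintype κ] [Fintype μ]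

/-- An analytic map germ `π` at `0` together with an ultrafilter `𝒲` converging to `0` over the
ultrafilter `𝒱`. Following one ultrafilter through a sequence of coordinate changes singles out one
chart at each blow-up, so that no covering by finitely many charts is needed. -/
structure IsLift (𝒱 : Ultrafilter (ι → ℝ)) (π : (κ → ℝ) → ι → ℝ) (𝒲 : Ultrafilter (κ → ℝ)) :
    Prop where
  analyticAt : AnalyticAt ℝ π 0
  map_zero : π 0 = 0
  le_nhds : (𝒲 : Filter (κ → ℝ)) ≤ 𝓝 0
  map_eq : 𝒲.map π = 𝒱

/-- A lift whose coordinates are monomials times units, so that it preserves normal crossings. -/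
structure IsMonomialLift (𝒱 : Ultrafilter (ι → ℝ)) (π : (κ → ℝ) → ι → ℝ)
    (𝒲 : Ultrafilter (κ → ℝ)) : Prop extends IsLift 𝒱 π 𝒲 where
  coord : ∀ i, IsNormalCrossing fun x => π x i

variable {𝒱 : Ultrafilter (ι → ℝ)} {π : (κ → ℝ) → ι → ℝ} {𝒲 : Ultrafilter (κ → ℝ)}

namespace IsLift

theorem refl (h𝒱 : (𝒱 : Filter (ι → ℝ)) ≤ 𝓝 0) : IsLift 𝒱 (fun x => x) 𝒱 :=
  ⟨analyticAt_id, rfl, h𝒱, 𝒱.map_id⟩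

theorem of_section {s : (ι → ℝ) → κ → ℝ} (hπ : AnalyticAt ℝ π 0) (h0 : π 0 = 0)
    (hs : Tendsto s 𝒱 (𝓝 0)) (hπs : ∀ᶠ x in (𝒱 : Filter (ι → ℝ)), π (s x) = x) :
    IsLift 𝒱 π (𝒱.map s) where
  analyticAt := hπ
  map_zero := h0
  le_nhds := hs
  map_eq := Ultrafilter.coe_injective <| by
    rw [Ultrafilter.map_map, Ultrafilter.coe_map]
    exact (map_congr hπs).trans map_id

theorem tendsto (h : IsLift 𝒱 π 𝒲) : Tendsto π (𝓝 0) (𝓝 0) := by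
  simpa only [h.map_zero] using h.analyticAt.continuousAt.tendsto

theorem comp (h : IsLift 𝒱 π 𝒲) {ρ : (μ → ℝ) → κ → ℝ} {𝒳 : Ultrafilter (μ → ℝ)}
    (h' : IsLift 𝒲 ρ 𝒳) :
    IsLift 𝒱 (fun x => π (ρ x)) 𝒳 where
  analyticAt := h.analyticAt.comp_of_eq h'.analyticAt h'.map_zero
  map_zero := (congrArg π h'.map_zero).trans h.map_zero
  le_nhds := h'.le_nhds
  map_eq := by rw [← h.map_eq, ← h'.map_eq, Ultrafilter.map_map]; rfl

theorem analyticAt_comp (h : IsLift 𝒱 π 𝒲) {f : (ι → ℝ) → ℝ} (hf : AnalyticAt ℝ f 0) :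
    AnalyticAt ℝ (fun x => f (π x)) 0 :=
  hf.comp_of_eq h.analyticAt h.map_zero

theorem isBigO_comp_iff (h : IsLift 𝒱 π 𝒲) {f g : (ι → ℝ) → ℝ} :
    (fun x => f (π x)) =O[𝒲] (fun x => g (π x)) ↔ f =O[𝒱] g := by
  rw [← h.map_eq, Ultrafilter.coe_map, Asymptotics.isBigO_map]
  rfl

end IsLift

namespace IsMonomialLift

theorem refl (h𝒱 : (𝒱 : Filter (ι → ℝ)) ≤ 𝓝 0) : IsMonomialLift 𝒱 (fun x => x) 𝒱 :=
  ⟨.refl h𝒱, .coord⟩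

theorem isNormalCrossing_comp (h : IsMonomialLift 𝒱 π 𝒲) {f : (ι → ℝ) → ℝ}
    (hf : IsNormalCrossing f) : IsNormalCrossing fun x => f (π x) :=
  hf.comp h.analyticAt h.map_zero h.coord

theorem comp (h : IsMonomialLift 𝒱 π 𝒲) {ρ : (μ → ℝ) → κ → ℝ} {𝒳 : Ultrafilter (μ → ℝ)}
    (h' : IsMonomialLift 𝒲 ρ 𝒳) : IsMonomialLift 𝒱 (fun x => π (ρ x)) 𝒳 :=
  ⟨h.toIsLift.comp h'.toIsLift, fun i => h'.isNormalCrossing_comp (h.coord i)⟩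

end IsMonomialLift

section Charts

/-- The ramified covering `x i ↦ s i * x i ^ D i` of the coordinates. -/
def ramification (s : ι → ℝ) (D : ι → ℕ) (x : ι → ℝ) : ι → ℝ :=
  fun i => s i * x i ^ D i

/-- The chart of the blow-up of `x i = x j = 0` in which the exceptional divisor is `x j = 0`,
centred at the point of the divisor where `x i / x j = c`. -/
def blowupChart [DecidableEq ι] (c : ℝ) (i j : ι) (x : ι → ℝ) : ι → ℝ :=
  Function.update x i ((c + x i) * x j)

/-- The exponents of a monomial with exponents `α` after pulling back along
`blowupChart c i j`. -/
noncomputable def blowupExponent [DecidableEq ι] (c : ℝ) (i j : ι) (α : ι → ℕ) : ι → ℕ :=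
  Function.update (Function.update α j (α i + α j)) i (if c = 0 then α i else 0)

theorem blowupChart_zero {ι : Type*} [DecidableEq ι] (c : ℝ) (i j : ι) :
    blowupChart c i j 0 = 0 := by
  simp [blowupChart]

theorem exists_isMonomialLift_ramification (h𝒱 : (𝒱 : Filter (ι → ℝ)) ≤ 𝓝 0) {D : ι → ℕ}
    (hD : ∀ i, D i ≠ 0) :
    ∃ (s : ι → ℝ) (𝒲 : Ultrafilter (ι → ℝ)), (∀ i, s i ≠ 0) ∧
      IsMonomialLift 𝒱 (ramification s D) 𝒲 := by
  have hsign : ∀ i, ∃ s : ℝ, s ≠ 0 ∧ ∀ᶠ x in (𝒱 : Filter (ι → ℝ)), s * |x i| = x i := fun i => by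
    rcases 𝒱.em fun x => 0 ≤ x i with h | h
    · exact ⟨1, one_ne_zero, h.mono fun x hx => by rw [abs_of_nonneg hx, one_mul]⟩
    · exact ⟨-1, by simp, h.mono fun x hx => by rw [abs_of_neg (not_le.1 hx), neg_one_mul, neg_neg]⟩
  choose s hs0 hs using hsign
  have hroot : Tendsto (fun (x : ι → ℝ) i => |x i| ^ ((D i : ℝ)⁻¹)) 𝒱 (𝓝 0) := by
    refine tendsto_pi_nhds.2 fun i => ?_
    have hpos : 0 < (D i : ℝ)⁻¹ := by have := Nat.pos_of_ne_zero (hD i); positivity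
    simpa [Real.zero_rpow hpos.ne'] using
      ((tendsto_pi_nhds.1 h𝒱 i).abs).rpow_const (p := (D i : ℝ)⁻¹) (.inr hpos.le)
  refine ⟨s, _, hs0, .of_section ?_ ?_ hroot ?_, fun i => ?_⟩
  · exact analyticAt_pi_iff.2 fun i => analyticAt_const.mul ((analyticAt_coord i 0).pow _)
  · exact funext fun i => by simp [ramification, hD i]
  · filter_upwards [eventually_all.2 hs] with x hx
    exact funext fun i => by
      rw [ramification, Real.rpow_inv_natCast_pow (abs_nonneg _) (hD i), hx]
  · exact (IsNormalCrossing.of_ne_zero analyticAt_const (hs0 i)).mul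
      ((IsNormalCrossing.coord i).pow _)

theorem HasExponent.comp_ramification {f : (ι → ℝ) → ℝ} {α : ι → ℕ} (hf : HasExponent f α)
    {s : ι → ℝ} (hs : ∀ i, s i ≠ 0) {D : ι → ℕ} (hD : ∀ i, D i ≠ 0) :
    HasExponent (fun x => f (ramification s D x)) (D * α) := by
  classical
  have hcoord : ∀ i, HasExponent (fun x => ramification s D x i) (0 + D i • Pi.single i 1) :=
    fun i => (HasExponent.of_ne_zero analyticAt_const (hs i)).mul ((HasExponent.coord i).pow _)
  convert hf.comp (analyticAt_pi_iff.2 fun i => (IsNormalCrossing.analyticAt ⟨_, hcoord i⟩))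
    (funext fun i => by simp [ramification, hD i]) hcoord using 1
  ext i
  simp [Finset.sum_apply, Pi.single_apply, mul_comm]

theorem hasExponent_blowupChart_coord [DecidableEq ι] (c : ℝ) (i j k : ι) :
    HasExponent (fun x => blowupChart c i j x k)
      (if k = i then (if c = 0 then Pi.single i 1 else 0) + Pi.single j 1 else Pi.single k 1) := by
  rcases eq_or_ne k i with rfl | hk
  · simp only [blowupChart, Function.update_self, if_true]
    refine HasExponent.mul ?_ (.coord j)
    split_ifs with hc
    · simpa only [hc, zero_add] using HasExponent.coord k
    · exact .of_ne_zero (analyticAt_const.add (analyticAt_coord k 0)) (by simpa using hc)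
  · simpa only [blowupChart, Function.update_of_ne hk, if_neg hk] using HasExponent.coord k

theorem analyticAt_blowupChart [DecidableEq ι] (c : ℝ) (i j : ι) :
    AnalyticAt ℝ (blowupChart c i j) 0 :=
  analyticAt_pi_iff.2 fun k =>
    IsNormalCrossing.analyticAt ⟨_, hasExponent_blowupChart_coord c i j k⟩

theorem exists_isMonomialLift_blowupChart [DecidableEq ι] (h𝒱 : (𝒱 : Filter (ι → ℝ)) ≤ 𝓝 0)
    {i j : ι} (hij : i ≠ j) (h : (fun x : ι → ℝ => x i) =O[𝒱] fun x => x j) :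
    ∃ c 𝒲, IsMonomialLift 𝒱 (blowupChart c i j) 𝒲 := by
  obtain ⟨c, hc⟩ := exists_tendsto_div_of_isBigO h
  refine ⟨c, _, .of_section (s := fun x => Function.update x i (x i / x j - c))
    (analyticAt_blowupChart c i j) (blowupChart_zero c i j) ?_ ?_,
    fun k => ⟨_, hasExponent_blowupChart_coord c i j k⟩⟩
  · refine tendsto_pi_nhds.2 fun k => ?_
    rcases eq_or_ne k i with rfl | hk
    · simpa using hc.sub_const c
    · simpa [hk] using tendsto_pi_nhds.1 h𝒱 k
  · filter_upwards [h.eventually_mul_div_cancel] with x hx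
    simpa [blowupChart, hij.symm] using hx

theorem HasExponent.comp_blowupChart [DecidableEq ι] {f : (ι → ℝ) → ℝ} {α : ι → ℕ}
    (hf : HasExponent f α) (c : ℝ) {i j : ι} (hij : i ≠ j) :
    HasExponent (fun x => f (blowupChart c i j x)) (blowupExponent c i j α) := by
  convert hf.comp (analyticAt_blowupChart c i j) (blowupChart_zero c i j)
    (hasExponent_blowupChart_coord c i j) using 1
  ext k
  have hrest : ∑ m ∈ Finset.univ.erase i, α m * (Pi.single m 1 : ι → ℕ) k =
      if k = i then 0 else α k := by
    simp [Pi.single_apply, Finset.sum_ite_eq]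
  rw [Finset.sum_apply, ← Finset.add_sum_erase _ _ (Finset.mem_univ i),
    Finset.sum_congr rfl fun m hm => by rw [if_neg (Finset.ne_of_mem_erase hm)]]
  simp only [Pi.smul_apply, smul_eq_mul, hrest, if_true, Pi.add_apply, blowupExponent]
  rcases eq_or_ne k i with rfl | hki
  · by_cases hc : c = 0 <;> simp [hij, hc]
  · rcases eq_or_ne k j with rfl | hkj <;> by_cases hc : c = 0 <;> simp [*, add_comm]

end Charts

end Lift

section Toric

theorem exists_ramification_balanced {ι : Type*} {α β : ι → ℕ} {i j : ι} (hi : β i < α i)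
    (hj : α j < β j) :
    ∃ D : ι → ℕ, (∀ k, D k ≠ 0) ∧ (D * α) i + (D * α) j = (D * β) i + (D * β) j := by
  classical
  have hij : i ≠ j := by rintro rfl; exact hi.asymm hj
  refine ⟨Function.update (Function.update 1 j (α i - β i)) i (β j - α j), fun k => ?_, ?_⟩
  · rcases eq_or_ne k i with rfl | hki
    · simpa using Nat.sub_ne_zero_of_lt hj
    · rcases eq_or_ne k j with rfl | hkj
      · simpa [hki] using Nat.sub_ne_zero_of_lt hi
      · simp [hki, hkj]
  · obtain ⟨p, hp⟩ := Nat.exists_eq_add_of_le hi.le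
    obtain ⟨q, hq⟩ := Nat.exists_eq_add_of_le hj.le
    simp only [Pi.mul_apply, Function.update_self, Function.update_of_ne hij.symm, hp, hq,
      Nat.add_sub_cancel_left]
    ring

variable {ι κ : Type*} [Fintype ι]

/-- Divisibility of germs at `0` with a monomial quotient (up to units). -/
def NormalCrossingDvd (f g : (ι → ℝ) → ℝ) : Prop :=
  ∃ q, IsNormalCrossing q ∧ ∀ᶠ x in 𝓝 0, g x = f x * q x

namespace NormalCrossingDvd

variable {f g h : (ι → ℝ) → ℝ}

theorem refl (f : (ι → ℝ) → ℝ) : NormalCrossingDvd f f :=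
  ⟨fun _ => 1, .of_ne_zero analyticAt_const one_ne_zero, by simp⟩

theorem trans (hfg : NormalCrossingDvd f g) (hgh : NormalCrossingDvd g h) :
    NormalCrossingDvd f h := by
  obtain ⟨q, hq, hg⟩ := hfg
  obtain ⟨r, hr, hh⟩ := hgh
  refine ⟨_, hq.mul hr, ?_⟩
  filter_upwards [hg, hh] with x hgx hhx
  rw [hhx, hgx, mul_assoc]

theorem comp_isMonomialLift [Fintype κ] {𝒱 : Ultrafilter (ι → ℝ)} {π : (κ → ℝ) → ι → ℝ}
    {𝒲 : Ultrafilter (κ → ℝ)} (hfg : NormalCrossingDvd f g) (h : IsMonomialLift 𝒱 π 𝒲) :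
    NormalCrossingDvd (fun x => f (π x)) (fun x => g (π x)) := by
  obtain ⟨q, hq, hg⟩ := hfg
  exact ⟨_, h.isNormalCrossing_comp hq, h.tendsto.eventually hg⟩

end NormalCrossingDvd

theorem HasExponent.normalCrossingDvd {f g : (ι → ℝ) → ℝ} {α β : ι → ℕ} (hf : HasExponent f α)
    (hg : HasExponent g β) (hle : α ≤ β) : NormalCrossingDvd f g := by
  obtain ⟨u, hu, hu0, hf⟩ := hf
  obtain ⟨v, hv, hv0, hg⟩ := hg
  refine ⟨_, ⟨β - α, fun x => v x / u x, hv.div hu hu0, div_ne_zero hv0 hu0,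
    .of_forall fun _ => rfl⟩, ?_⟩
  filter_upwards [hf, hg, hu.continuousAt.eventually_ne hu0] with x hfx hgx hux
  have hprod : ∏ i, x i ^ β i = (∏ i, x i ^ α i) * ∏ i, x i ^ (β - α) i := by
    simp only [← Finset.prod_mul_distrib, ← pow_add, Pi.sub_apply, Nat.add_sub_cancel' (hle _)]
  rw [hfx, hgx, hprod]
  field_simp

theorem blowupExponent_ne_ssubset [DecidableEq ι] (c : ℝ) {i j : ι} (hij : i ≠ j) {α β : ι → ℕ}
    (hsum : α i + α j = β i + β j) (hj : α j ≠ β j) :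
    ({k | blowupExponent c i j α k ≠ blowupExponent c i j β k} : Finset ι) ⊂
      ({k | α k ≠ β k} : Finset ι) := by
  refine Finset.ssubset_iff_of_subset (fun k => ?_) |>.2 ⟨j, by simpa using hj, ?_⟩
  · rw [Finset.mem_filter_univ, Finset.mem_filter_univ]
    refine mt fun hk => ?_
    simp only [blowupExponent]
    rcases eq_or_ne k i with rfl | hki
    · simp [hk]
    · rcases eq_or_ne k j with rfl | hkj
      · simp [hki, hsum]
      · simp [hki, hkj, hk]
  · simp [blowupExponent, hij.symm, hsum]

/-- If the exponents of `f` and `g` compare in opposite ways at `i` and `j`, ramifying first makes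
the sums of their exponents at `i` and `j` equal, so that `f` and `g` get the same exponent along
the exceptional divisor of the blow-up of `x i = x j = 0`. -/
theorem HasExponent.exists_normalCrossingDvd_comp {N : ℕ} :
    ∀ {𝒱 : Ultrafilter (ι → ℝ)}, (𝒱 : Filter (ι → ℝ)) ≤ 𝓝 0 →
    ∀ {f g : (ι → ℝ) → ℝ} {α β : ι → ℕ}, HasExponent f α → HasExponent g β →
      ({k | α k ≠ β k} : Finset ι).card = N →
      ∃ (π : (ι → ℝ) → ι → ℝ) (𝒲 : Ultrafilter (ι → ℝ)), IsMonomialLift 𝒱 π 𝒲 ∧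
        (NormalCrossingDvd (fun x => f (π x)) (fun x => g (π x)) ∨
          NormalCrossingDvd (fun x => g (π x)) (fun x => f (π x))) := by
  classical
  induction N using Nat.strong_induction_on with | _ N ih
  intro 𝒱 h𝒱 f g α β hf hg hN
  by_cases hαβ : α ≤ β
  · exact ⟨_, _, .refl h𝒱, .inl (hf.normalCrossingDvd hg hαβ)⟩
  by_cases hβα : β ≤ α
  · exact ⟨_, _, .refl h𝒱, .inr (hg.normalCrossingDvd hf hβα)⟩
  simp only [Pi.le_def, not_forall, not_le] at hαβ hβα
  obtain ⟨i, hi⟩ := hαβ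
  obtain ⟨j, hj⟩ := hβα
  have hij : i ≠ j := by rintro rfl; exact hi.asymm hj
  obtain ⟨D, hD, hsum⟩ := exists_ramification_balanced hi hj
  obtain ⟨s, 𝒲, hs, hram⟩ := exists_isMonomialLift_ramification h𝒱 hD
  have hne : ∀ k, α k ≠ β k ↔ (D * α) k ≠ (D * β) k := fun k => by
    simp [Nat.mul_right_inj (hD k)]
  have hblowup : ∀ i j : ι, i ≠ j → (D * α) i + (D * α) j = (D * β) i + (D * β) j → α j ≠ β j →
      ((fun x : ι → ℝ => x i) =O[𝒲] fun x => x j) →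
      ∃ (π : (ι → ℝ) → ι → ℝ) (𝒲 : Ultrafilter (ι → ℝ)), IsMonomialLift 𝒱 π 𝒲 ∧
        (NormalCrossingDvd (fun x => f (π x)) (fun x => g (π x)) ∨
          NormalCrossingDvd (fun x => g (π x)) (fun x => f (π x))) := by
    intro i j hij hsum hj hO
    obtain ⟨c, 𝒳, hblow⟩ := exists_isMonomialLift_blowupChart hram.le_nhds hij hO
    simp only [hne] at hN hj
    obtain ⟨π, 𝒴, hπ, hdvd⟩ := ih _
      ((Finset.card_lt_card (blowupExponent_ne_ssubset c hij hsum hj)).trans_eq hN) hblow.le_nhds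
      ((hf.comp_ramification hs hD).comp_blowupChart c hij)
      ((hg.comp_ramification hs hD).comp_blowupChart c hij) rfl
    exact ⟨_, 𝒴, (hram.comp hblow).comp hπ, hdvd⟩
  rcases isBigO_or_isBigO_of_ultrafilter 𝒲 (fun x => x i) (fun x => x j) with hO | hO
  · exact hblowup i j hij hsum hj.ne hO
  · exact hblowup j i hij.symm ((add_comm _ _).trans (hsum.trans (add_comm _ _))) hi.ne' hO

theorem IsNormalCrossing.exists_normalCrossingDvd_comp {𝒱 : Ultrafilter (ι → ℝ)}
    (h𝒱 : (𝒱 : Filter (ι → ℝ)) ≤ 𝓝 0) {f g : (ι → ℝ) → ℝ} (hf : IsNormalCrossing f)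
    (hg : IsNormalCrossing g) :
    ∃ (π : (ι → ℝ) → ι → ℝ) (𝒲 : Ultrafilter (ι → ℝ)), IsMonomialLift 𝒱 π 𝒲 ∧
      (NormalCrossingDvd (fun x => f (π x)) (fun x => g (π x)) ∨
        NormalCrossingDvd (fun x => g (π x)) (fun x => f (π x))) := by
  obtain ⟨α, hα⟩ := hf
  obtain ⟨β, hβ⟩ := hg
  exact hα.exists_normalCrossingDvd_comp h𝒱 hβ rfl

theorem exists_forall_normalCrossingDvd_comp {𝒱 : Ultrafilter (ι → ℝ)}
    (h𝒱 : (𝒱 : Filter (ι → ℝ)) ≤ 𝓝 0) {J : Finset κ} (hJ : J.Nonempty) {f : κ → (ι → ℝ) → ℝ}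
    (hf : ∀ k ∈ J, IsNormalCrossing (f k)) :
    ∃ (π : (ι → ℝ) → ι → ℝ) (𝒲 : Ultrafilter (ι → ℝ)), IsMonomialLift 𝒱 π 𝒲 ∧
      ∃ k₀ ∈ J, ∀ k ∈ J, NormalCrossingDvd (fun x => f k₀ (π x)) (fun x => f k (π x)) := by
  induction hJ using Finset.Nonempty.cons_induction with
  | singleton k => exact ⟨_, _, .refl h𝒱, k, by simp, by simp [NormalCrossingDvd.refl]⟩
  | cons k' J hk' _ ih =>
    rw [Finset.forall_mem_cons] at hf
    obtain ⟨π, 𝒲, hπ, k₀, hk₀, hdvd⟩ := ih hf.2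
    obtain ⟨ρ, 𝒳, hρ, hor⟩ := (hπ.isNormalCrossing_comp (hf.2 k₀ hk₀)).exists_normalCrossingDvd_comp
      hπ.le_nhds (hπ.isNormalCrossing_comp hf.1)
    refine ⟨_, 𝒳, hπ.comp hρ, ?_⟩
    have hdvd' := fun k hk => (hdvd k hk).comp_isMonomialLift hρ
    rcases hor with h | h
    · exact ⟨k₀, Finset.mem_cons_of_mem hk₀, Finset.forall_mem_cons hk' _ |>.2 ⟨h, hdvd'⟩⟩
    · exact ⟨k', Finset.mem_cons_self _ _,
        Finset.forall_mem_cons hk' _ |>.2 ⟨.refl _, fun k hk => h.trans (hdvd' k hk)⟩⟩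

theorem IsNormalCrossing.exists_common_root {𝒱 : Ultrafilter (ι → ℝ)}
    (h𝒱 : (𝒱 : Filter (ι → ℝ)) ≤ 𝓝 0) {J : Finset κ} (hJ : J.Nonempty) {c : κ → (ι → ℝ) → ℝ}
    (hc : ∀ k ∈ J, IsNormalCrossing (c k)) {e : κ → ℕ} (he : ∀ k ∈ J, e k ≠ 0) :
    ∃ (π : (ι → ℝ) → ι → ℝ) (𝒲 : Ultrafilter (ι → ℝ)) (w : (ι → ℝ) → ℝ) (q : κ → (ι → ℝ) → ℝ),
      IsMonomialLift 𝒱 π 𝒲 ∧ IsNormalCrossing w ∧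
      (∀ k ∈ J, AnalyticAt ℝ (q k) 0 ∧ ∀ᶠ x in 𝓝 0, c k (π x) = w x ^ e k * q k x) ∧
      ∃ k₀ ∈ J, q k₀ 0 ≠ 0 := by
  choose! α hα using hc
  set D := ∏ k ∈ J, e k
  obtain ⟨s, 𝒲, hs, hram⟩ := exists_isMonomialLift_ramification h𝒱
    (D := fun _ => D) fun _ => Finset.prod_ne_zero_iff.2 he
  have hroot : ∀ k ∈ J, ∃ u : (ι → ℝ) → ℝ, AnalyticAt ℝ u 0 ∧ u 0 ≠ 0 ∧ ∀ᶠ x in 𝓝 0,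
      c k (ramification s (fun _ => D) x) = (∏ i, x i ^ ((D / e k) • α k) i) ^ e k * u x := by
    intro k hk
    refine HasExponent.eventually_eq_pow_mul ?_
    rw [smul_smul, Nat.mul_div_cancel' (Finset.dvd_prod_of_mem e hk)]
    exact (hα k hk).comp_ramification hs fun _ => Finset.prod_ne_zero_iff.2 he
  choose! u hu hu0 hcu using hroot
  obtain ⟨π, 𝒳, hπ, k₀, hk₀, hdvd⟩ := exists_forall_normalCrossingDvd_comp hram.le_nhds hJ
    (f := fun k x => ∏ i, x i ^ ((D / e k) • α k) i) fun k _ => ⟨_, .prod_pow _⟩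
  choose! r hr hW using hdvd
  set W : κ → (ι → ℝ) → ℝ := fun k x => ∏ i, x i ^ ((D / e k) • α k) i
  have hw : IsNormalCrossing fun x => W k₀ (π x) := hπ.isNormalCrossing_comp ⟨_, .prod_pow _⟩
  have hrk₀ : ∀ᶠ x in 𝓝 0, 1 = r k₀ x :=
    eventually_eq_of_mul_left_eq hw.analyticAt analyticAt_const (hr k₀ hk₀).analyticAt
      hw.not_eventually_eq_zero ((hW k₀ hk₀).mono fun x hx => (mul_one _).trans hx)
  refine ⟨_, 𝒳, fun x => W k₀ (π x), fun k x => r k x ^ e k * u k (π x), hram.comp hπ, hw,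
    fun k hk => ⟨((hr k hk).analyticAt.pow _).mul (hπ.analyticAt_comp (hu k hk)), ?_⟩, k₀, hk₀, ?_⟩
  · filter_upwards [hπ.tendsto.eventually (hcu k hk), hW k hk] with x hcx hWx
    rw [hcx, hWx, mul_pow, mul_assoc]
  · simpa [← hrk₀.self_of_nhds, hπ.map_zero] using hu0 k₀ hk₀

end Toric

section IteratedLineDeriv

variable {E : Type*} [NormedAddCommGroup E] [NormedSpace ℝ E] {g : E → ℝ} {e x₀ : E}

/-- The `k`-th derivative of `g` in the direction `e`. -/
noncomputable def iteratedLineDeriv (k : ℕ) (g : E → ℝ) (e x : E) : ℝ :=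
  iteratedDeriv k (fun t : ℝ => g (x + t • e)) 0

theorem iteratedLineDeriv_zero (g : E → ℝ) (e x : E) : iteratedLineDeriv 0 g e x = g x := by
  simp [iteratedLineDeriv]

theorem iteratedLineDeriv_succ (k : ℕ) (g : E → ℝ) (e x : E) :
    iteratedLineDeriv (k + 1) g e x = lineDeriv ℝ (iteratedLineDeriv k g e) x e := by
  have hshift : (fun t : ℝ => iteratedLineDeriv k g e (x + t • e)) =
      iteratedDeriv k fun s : ℝ => g (x + s • e) := funext fun t => by
    have := congrFun (iteratedDeriv_comp_const_add k (fun s : ℝ => g (x + s • e)) t) 0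
    simpa only [iteratedLineDeriv, add_smul, add_assoc, add_zero] using this
  rw [lineDeriv, hshift, ← iteratedDeriv_succ, iteratedLineDeriv]

theorem iteratedLineDeriv_add_smul {φ : E → ℝ} (hφ : ∀ (x : E) (t : ℝ), φ (x + t • e) = φ x)
    (k : ℕ) (g : E → ℝ) (x : E) :
    iteratedLineDeriv k (fun y => g (y + φ y • e)) e x =
      iteratedLineDeriv k g e (x + φ x • e) := by
  simp only [iteratedLineDeriv, hφ, add_right_comm]

theorem analyticAt_lineDeriv (hg : AnalyticAt ℝ g x₀) :
    AnalyticAt ℝ (fun x => lineDeriv ℝ g x e) x₀ :=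
  (((ContinuousLinearMap.apply ℝ ℝ e).analyticAt _).comp hg.fderiv).congr <|
    hg.eventually_analyticAt.mono fun _ hx => hx.differentiableAt.lineDeriv_eq_fderiv.symm

theorem analyticAt_iteratedLineDeriv (hg : AnalyticAt ℝ g x₀) (k : ℕ) :
    AnalyticAt ℝ (iteratedLineDeriv k g e) x₀ := by
  induction k with
  | zero => exact hg.congr (.of_forall fun x => (iteratedLineDeriv_zero g e x).symm)
  | succ k ih =>
    exact (analyticAt_lineDeriv ih).congr <|
      .of_forall fun x => (iteratedLineDeriv_succ k g e x).symm

end IteratedLineDeriv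

section Weierstrass

variable {E : Type*} [NormedAddCommGroup E] [NormedSpace ℝ E]
  {g : E → ℝ} {l : E →L[ℝ] ℝ} {e : E}

theorem iteratedDeriv_pow_mul_zero {v : ℝ → ℝ} {d k : ℕ} (hv : ContDiffAt ℝ k v 0)
    (hk : k ≤ d) :
    iteratedDeriv k (fun t => t ^ d * v t) 0 = if k = d then d.factorial * v 0 else 0 := by
  rw [iteratedDeriv_fun_mul (by fun_prop) hv]
  simp only [iteratedDeriv_fun_pow_zero]
  rw [Finset.sum_eq_single_of_mem k (Finset.self_mem_range_succ k)]
  · split_ifs <;> simp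
  · intro i hi hik
    rw [if_neg (by grind), Nat.cast_zero, mul_zero, zero_mul]

theorem iteratedDeriv_sum_mul_pow_add_pow_mul_zero {v : ℝ → ℝ} {d k : ℕ} (a : ℕ → ℝ)
    (hv : ContDiffAt ℝ k v 0) (hk : k ≤ d) :
    iteratedDeriv k (fun t => ∑ j ∈ Finset.range d, a j * t ^ j + t ^ d * v t) 0 =
      k.factorial * if k = d then v 0 else a k := by
  rw [iteratedDeriv_fun_add (by fun_prop) (by fun_prop), iteratedDeriv_pow_mul_zero hv hk,
    iteratedDeriv_fun_sum fun j _ => by fun_prop]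
  simp only [iteratedDeriv_const_mul_field, iteratedDeriv_fun_pow_zero, Nat.cast_ite,
    Nat.cast_zero, mul_ite, mul_zero, Finset.sum_ite_eq, Finset.mem_range]
  rcases hk.eq_or_lt with rfl | hk
  · simp
  · simp [hk, hk.ne, mul_comm]

theorem exists_taylor_along (hg : AnalyticAt ℝ g 0) (l : E →L[ℝ] ℝ) (e : E) (d : ℕ) :
    ∃ (c : ℕ → E → ℝ) (u : E → ℝ), (∀ j, AnalyticAt ℝ (c j) 0) ∧ AnalyticAt ℝ u 0 ∧
      ∀ᶠ x in 𝓝 0, g x =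
        ∑ j ∈ Finset.range d, c j (x - l x • e) * l x ^ j + l x ^ d * u x := by
  induction d with
  | zero => exact ⟨fun _ => g, g, fun _ => hg, hg, by simp⟩
  | succ d ih =>
    obtain ⟨c, u, hc, hu, hgc⟩ := ih
    obtain ⟨v, hv, huv⟩ := exists_analyticAt_eq_add_smul hu l e
    refine ⟨Function.update c d u, v, fun j => ?_, hv, ?_⟩
    · rcases eq_or_ne j d with rfl | hj <;> simp [*]
    · filter_upwards [hgc, huv] with x hx hux
      have hlow : ∑ j ∈ Finset.range d, Function.update c d u j (x - l x • e) * l x ^ j =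
          ∑ j ∈ Finset.range d, c j (x - l x • e) * l x ^ j :=
        Finset.sum_congr rfl fun j hj => by
          rw [Function.update_of_ne (Finset.mem_range.1 hj).ne]
      rw [hx, hux, Finset.sum_range_succ, Function.update_self, hlow, smul_eq_mul]
      ring

theorem exists_taylor_along_eq_iteratedLineDeriv (hg : AnalyticAt ℝ g 0) (hl : l e = 1) (d : ℕ) :
    ∃ u : E → ℝ, AnalyticAt ℝ u 0 ∧ iteratedLineDeriv d g e 0 = d.factorial * u 0 ∧
      ∀ᶠ x in 𝓝 0, g x = ∑ j ∈ Finset.range d,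
        iteratedLineDeriv j g e (x - l x • e) / j.factorial * l x ^ j + l x ^ d * u x := by
  obtain ⟨c, u, -, hu, hgc⟩ := exists_taylor_along hg l e d
  have hproj : Continuous fun x => x - l x • e := by fun_prop
  have hderiv : ∀ᶠ y in 𝓝 0, l y = 0 → ∀ k ≤ d,
      iteratedLineDeriv k g e y = k.factorial * if k = d then u y else c k y := by
    filter_upwards [hgc.eventually_nhds, hu.eventually_analyticAt] with y hy huy hly k hk
    have hline : AnalyticAt ℝ (fun t : ℝ => y + t • e) 0 := by fun_prop
    have hline₀ : (fun t : ℝ => y + t • e) 0 = y := by simp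
    have hexp : (fun t : ℝ => g (y + t • e)) =ᶠ[𝓝 0] fun t =>
        ∑ j ∈ Finset.range d, c j y * t ^ j + t ^ d * u (y + t • e) := by
      filter_upwards [hline.continuousAt.eventually (by rwa [hline₀])] with t ht
      simpa [hly, hl] using ht
    rw [iteratedLineDeriv, hexp.iteratedDeriv_eq,
      iteratedDeriv_sum_mul_pow_add_pow_mul_zero (fun j => c j y) _ hk]
    · simp
    · exact (huy.comp_of_eq hline hline₀).contDiffAt
  refine ⟨u, hu, by simpa using hderiv.self_of_nhds (map_zero l) d le_rfl, ?_⟩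
  filter_upwards [hgc, (hproj.tendsto' 0 0 (by simp)).eventually hderiv] with x hx hpx
  rw [hx]
  congr 1
  refine Finset.sum_congr rfl fun j hj => ?_
  have hj := Finset.mem_range.1 hj
  rw [hpx (by simp [hl]) j hj.le, if_neg hj.ne, mul_div_cancel_left₀ _ (by positivity)]

theorem exists_analyticAt_apply_add_smul_eq_zero [CompleteSpace E] (hg : AnalyticAt ℝ g 0)
    (h0 : g 0 = 0) (h1 : lineDeriv ℝ g 0 e ≠ 0) :
    ∃ φ : E → ℝ, AnalyticAt ℝ φ 0 ∧ φ 0 = 0 ∧ ∀ᶠ x in 𝓝 0, g (x + φ x • e) = 0 := by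
  let L : E × ℝ →L[ℝ] E := .coprod (.id ℝ E) (.toSpanSingleton ℝ e)
  have hL : ∀ x (t : ℝ), L (x, t) = x + t • e := fun x t => by simp [L]
  have hL0 : L (0, 0) = 0 := map_zero L
  have hgL : ContDiffAt ℝ ω (g ∘ L) (0, 0) :=
    (AnalyticAt.comp (by rwa [hL0]) (L.analyticAt _)).contDiffAt
  have hderiv : fderiv ℝ (g ∘ L) (0, 0) ∘L .inr ℝ E ℝ =
      ContinuousLinearMap.toSpanSingleton ℝ (lineDeriv ℝ g 0 e) := by
    ext
    rw [fderiv_comp _ (by rw [hL0]; exact hg.differentiableAt) L.differentiableAt,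
      L.fderiv, hL0, hg.differentiableAt.lineDeriv_eq_fderiv]
    simp [L]
  have hinv : (fderiv ℝ (g ∘ L) (0, 0) ∘L .inr ℝ E ℝ).IsInvertible :=
    ⟨ContinuousLinearEquiv.unitsEquivAut ℝ (Units.mk0 _ h1), by rw [hderiv]; ext; simp⟩
  refine ⟨hgL.implicitFunction (by simp) hinv,
    (hgL.contDiffAt_implicitFunction (by simp) hinv).analyticAt,
    hgL.implicitFunction_apply_self (by simp) hinv, ?_⟩
  filter_upwards [hgL.eventually_apply_implicitFunction (by simp) hinv] with x hx
  simpa only [Function.comp_apply, hL, zero_add, zero_smul, h0] using hx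

theorem exists_tschirnhaus [CompleteSpace E] {d : ℕ} (hg : AnalyticAt ℝ g 0) (hl : l e = 1)
    (hd : analyticOrderAt (fun t : ℝ => g (t • e)) 0 = (d + 1 : ℕ)) :
    ∃ (φ : E → ℝ) (c : ℕ → E → ℝ) (u : E → ℝ), AnalyticAt ℝ φ 0 ∧ φ 0 = 0 ∧
      (∀ j, AnalyticAt ℝ (c j) 0) ∧ (∀ j < d, c j 0 = 0) ∧ AnalyticAt ℝ u 0 ∧ u 0 ≠ 0 ∧
      ∀ᶠ x in 𝓝 0, g (x + φ (x - l x • e) • e) =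
        ∑ j ∈ Finset.range d, c j (x - l x • e) * l x ^ j + l x ^ (d + 1) * u x := by
  have hline : AnalyticAt ℝ (fun t : ℝ => g (t • e)) 0 :=
    hg.comp_of_eq (analyticAt_id.smul analyticAt_const) (zero_smul ℝ e)
  obtain ⟨hlow, htop⟩ := (analyticOrderAt_eq_nat_iff_iteratedDeriv_eq_zero hline).1 hd
  have hD : ∀ k, iteratedLineDeriv k g e 0 = iteratedDeriv k (fun t : ℝ => g (t • e)) 0 :=
    fun k => by simp only [iteratedLineDeriv, zero_add]
  simp only [← hD] at hlow htop
  obtain ⟨φ, hφ, hφ0, hroot⟩ := exists_analyticAt_apply_add_smul_eq_zero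
    (analyticAt_iteratedLineDeriv hg d) (hlow d d.lt_succ_self)
    (by rwa [← iteratedLineDeriv_succ])
  let p : E →L[ℝ] E := .id ℝ E - l.smulRight e
  have hG : AnalyticAt ℝ (fun x => g (x + φ (p x) • e)) 0 :=
    hg.comp_of_eq (analyticAt_id.add (.smul (hφ.comp_of_eq (p.analyticAt 0) (map_zero p))
      analyticAt_const)) (by simp [hφ0])
  have hDG : ∀ k x, iteratedLineDeriv k (fun x => g (x + φ (p x) • e)) e x =
      iteratedLineDeriv k g e (x + φ (p x) • e) := fun k =>
    iteratedLineDeriv_add_smul (φ := fun x => φ (p x)) (fun x t => by simp [p, hl, add_smul]) k g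
  obtain ⟨u, hu, hu0, hsum⟩ := exists_taylor_along_eq_iteratedLineDeriv hG hl (d + 1)
  simp only [hDG, map_zero, hφ0, zero_smul, add_zero] at hu0
  refine ⟨φ, fun j x => iteratedLineDeriv j (fun x => g (x + φ (p x) • e)) e x / j.factorial, u,
    hφ, hφ0, fun j => ((analyticAt_iteratedLineDeriv hG j).div analyticAt_const (by positivity)),
    fun j hj => ?_, hu, right_ne_zero_of_mul (hu0 ▸ htop), ?_⟩
  · simp [hDG, hφ0, hlow j (by omega)]
  · filter_upwards [hsum, (p.continuous.tendsto' 0 0 (map_zero p)).eventually hroot] with x hx hpx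
    have hpp : p (x - l x • e) = p x := by simp [p, hl]
    have hd0 : iteratedLineDeriv d (fun x => g (x + φ (p x) • e)) e (x - l x • e) = 0 := by
      rw [hDG, hpp]
      exact hpx
    refine hx.trans ?_
    rw [Finset.sum_range_succ, hd0, zero_div, zero_mul, add_zero]

end Weierstrass

section RootMultiplicity

open Polynomial

theorem analyticOrderAt_eval_add {p : ℝ[X]} (hp : p ≠ 0) (a : ℝ) :
    analyticOrderAt (fun t => p.eval (a + t)) 0 = p.rootMultiplicity a := by
  obtain ⟨q, hpq, hq⟩ := exists_eq_pow_rootMultiplicity_mul_and_not_dvd p hp a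
  have hana : ∀ r : ℝ[X], AnalyticAt ℝ (fun t => r.eval (a + t)) 0 := fun r =>
    (AnalyticOnNhd.eval_polynomial r _ (Set.mem_univ _)).comp_of_eq
      (analyticAt_const.add analyticAt_id) rfl
  refine (hana p).analyticOrderAt_eq_natCast.2 ⟨_, hana q, ?_, .of_forall fun t => ?_⟩
  · rwa [add_zero, Ne, ← IsRoot.def, ← dvd_iff_isRoot]
  · conv_lhs => rw [hpq]
    simp

theorem rootMultiplicity_lt_natDegree {R : Type*} [CommRing R] [IsDomain R] [CharZero R]
    {p : R[X]} {d k : ℕ} (hdeg : p.natDegree = d + 1) (hd : p.coeff d = 0) (hk : k < d)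
    (hpk : p.coeff k ≠ 0) (z : R) : p.rootMultiplicity z < p.natDegree := by
  by_contra! hle
  have hp := eq_leadingCoeff_mul_of_monic_of_dvd_of_natDegree_le
    ((monic_X_sub_C z).pow (d + 1)) ((pow_dvd_pow _ (hdeg ▸ hle)).trans
      (pow_rootMultiplicity_dvd p z)) (by simp [hdeg])
  have hlead : p.leadingCoeff ≠ 0 := fun h => hpk (by simp [leadingCoeff_eq_zero.1 h])
  have hcoeff : ∀ j, p.coeff j =
      p.leadingCoeff * ((-z) ^ (d + 1 - j) * (d + 1).choose j) := fun j => by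
    conv_lhs => rw [hp, sub_eq_add_neg, ← C_neg, coeff_C_mul, coeff_X_add_C_pow]
  have hz : z = 0 := by
    have := (hcoeff d).symm.trans hd
    simpa [hlead, Nat.cast_add_one_ne_zero] using this
  exact hpk (by simp [hcoeff k, hz, zero_pow (show d + 1 - k ≠ 0 by omega)])

end RootMultiplicity

section LocalUniformization

variable {ι : Type*}

theorem tendsto_nhds_zero_option {α : Type*} {l : Filter α} {f : α → Option ι → ℝ} :
    Tendsto f l (𝓝 0) ↔
      Tendsto (fun x => f x none) l (𝓝 0) ∧ Tendsto (fun x => f x ∘ some) l (𝓝 0) := by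
  simp only [tendsto_pi_nhds, Option.forall, Function.comp_apply, Pi.zero_apply]

theorem optionElim_comp_some (x : Option ι → ℝ) : Option.elim' (x none) (x ∘ some) = x := by
  ext (_ | _) <;> rfl

theorem optionElim_zero : Option.elim' (0 : ℝ) (0 : ι → ℝ) = 0 := by
  ext (_ | _) <;> rfl

variable [Fintype ι]

theorem analyticAt_comp_some (x₀ : Option ι → ℝ) :
    AnalyticAt ℝ (fun x : Option ι → ℝ => x ∘ some) x₀ :=
  analyticAt_pi_iff.2 fun i => analyticAt_coord (some i) x₀

theorem analyticAt_optionElim {E : Type*} [NormedAddCommGroup E] [NormedSpace ℝ E]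
    {f : E → ℝ} {g : E → ι → ℝ} {x₀ : E} (hf : AnalyticAt ℝ f x₀) (hg : AnalyticAt ℝ g x₀) :
    AnalyticAt ℝ (fun x => Option.elim' (f x) (g x)) x₀ :=
  analyticAt_pi_iff.2 fun o => by
    cases o with
    | none => exact hf
    | some i => exact analyticAt_pi_iff.1 hg i

theorem analyticAt_apply_comp_some {f : (ι → ℝ) → ℝ} (hf : AnalyticAt ℝ f 0) :
    AnalyticAt ℝ (fun x : Option ι → ℝ => f (x ∘ some)) 0 :=
  hf.comp_of_eq (analyticAt_comp_some 0) rfl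

theorem tendsto_comp_some {ι : Type*} :
    Tendsto (fun x : Option ι → ℝ => x ∘ some) (𝓝 0) (𝓝 0) :=
  (continuous_pi fun i => continuous_apply (some i)).tendsto 0

theorem IsNormalCrossing.comp_some {f : (ι → ℝ) → ℝ} (hf : IsNormalCrossing f) :
    IsNormalCrossing fun x : Option ι → ℝ => f (x ∘ some) :=
  hf.comp (analyticAt_comp_some 0) rfl fun i => .coord (some i)

theorem IsMonomialLift.exists_option {𝒱 : Ultrafilter (Option ι → ℝ)}
    (h𝒱 : (𝒱 : Filter (Option ι → ℝ)) ≤ 𝓝 0) {π : (ι → ℝ) → ι → ℝ} {𝒲 : Ultrafilter (ι → ℝ)}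
    (h : IsMonomialLift (𝒱.map (· ∘ some)) π 𝒲) :
    ∃ 𝒳, IsMonomialLift 𝒱 (fun x => Option.elim' (x none) (π (x ∘ some))) 𝒳 := by
  set ρ : (Option ι → ℝ) → Option ι → ℝ := fun x => Option.elim' (x none) (π (x ∘ some))
  have hne : (comap ρ (𝒱 : Filter (Option ι → ℝ)) ⊓
      comap (· ∘ some) (𝒲 : Filter (ι → ℝ))).NeBot := by
    rw [inf_neBot_iff]
    rintro _ ⟨A, hA, hAs⟩ _ ⟨B, hB, hBt⟩
    have hπB : π '' B ∈ 𝒱.map (· ∘ some) := h.map_eq ▸ image_mem_map hB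
    obtain ⟨y, hyA, b, hb, hby⟩ := 𝒱.nonempty_of_mem (inter_mem hA hπB)
    refine ⟨Option.elim' (y none) b, hAs ?_, hBt hb⟩
    have : ρ (Option.elim' (y none) b) = y := by
      change Option.elim' (y none) (π b) = y
      rw [hby]
      exact optionElim_comp_some y
    rwa [Set.mem_preimage, this]
  obtain ⟨𝒳, h𝒳⟩ := Ultrafilter.exists_le (comap ρ (𝒱 : Filter (Option ι → ℝ)) ⊓
      comap (· ∘ some) (𝒲 : Filter (ι → ℝ)))
  have hρ : Tendsto ρ 𝒳 𝒱 := tendsto_iff_comap.2 (h𝒳.trans inf_le_left)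
  have htail : Tendsto (· ∘ some) (𝒳 : Filter (Option ι → ℝ)) (𝒲 : Filter (ι → ℝ)) :=
    tendsto_iff_comap.2 (h𝒳.trans inf_le_right)
  refine ⟨𝒳, ⟨?_, ?_, ?_, Ultrafilter.coe_injective (𝒱.unique hρ)⟩, ?_⟩
  · exact analyticAt_optionElim (analyticAt_coord none 0)
      (h.analyticAt.comp_of_eq (analyticAt_comp_some 0) rfl)
  · exact (congrArg (Option.elim' (0 : ℝ)) h.map_zero).trans optionElim_zero
  · exact tendsto_nhds_zero_option.2
      ⟨(tendsto_nhds_zero_option.1 (hρ.mono_right h𝒱)).1, htail.mono_right h.le_nhds⟩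
  · rintro (_ | i)
    · exact .coord none
    · exact (h.coord i).comp_some

/-- Every nonzero analytic germ in the variables `ι` becomes a normal crossing along a suitable
lift of any given ultrafilter converging to `0`. -/
def LocalUniformization (ι : Type*) [Fintype ι] : Prop :=
  ∀ ⦃𝒱 : Ultrafilter (ι → ℝ)⦄, (𝒱 : Filter (ι → ℝ)) ≤ 𝓝 0 → ∀ ⦃f : (ι → ℝ) → ℝ⦄,
    AnalyticAt ℝ f 0 → (¬ ∀ᶠ x in 𝓝 0, f x = 0) →
      ∃ (π : (ι → ℝ) → ι → ℝ) (𝒲 : Ultrafilter (ι → ℝ)),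
        IsLift 𝒱 π 𝒲 ∧ IsNormalCrossing fun x => f (π x)

theorem LocalUniformization.exists_isMonomialLift {κ : Type*} (h : LocalUniformization ι)
    {𝒱 : Ultrafilter (ι → ℝ)} (h𝒱 : (𝒱 : Filter (ι → ℝ)) ≤ 𝓝 0) (J : Finset κ)
    {c : κ → (ι → ℝ) → ℝ} (hc : ∀ k ∈ J, AnalyticAt ℝ (c k) 0)
    (hc0 : ∀ k ∈ J, ¬ ∀ᶠ x in 𝓝 0, c k x = 0) :
    ∃ (π : (ι → ℝ) → ι → ℝ) (𝒲 : Ultrafilter (ι → ℝ)),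
      IsMonomialLift 𝒱 π 𝒲 ∧ ∀ k ∈ J, IsNormalCrossing fun x => c k (π x) := by
  let F : κ ⊕ ι → (ι → ℝ) → ℝ := Sum.elim c fun i x => x i
  have hF : ∀ k ∈ J.disjSum Finset.univ,
      AnalyticAt ℝ (F k) 0 ∧ ¬ ∀ᶠ x in 𝓝 0, F k x = 0 := by
    rintro (k | i) hk
    · exact ⟨hc k (by simpa using hk), hc0 k (by simpa using hk)⟩
    · exact ⟨analyticAt_coord i 0, not_eventually_coord_eq_zero i⟩
  obtain ⟨π, 𝒲, hπ, hnc⟩ := h h𝒱 (f := fun x => ∏ k ∈ J.disjSum Finset.univ, F k x)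
    (Finset.analyticAt_fun_prod _ fun k hk => (hF k hk).1)
    (not_eventually_prod_eq_zero _ (fun k hk => (hF k hk).1) fun k hk => (hF k hk).2)
  have hFπ := IsNormalCrossing.of_prod (fun k hk => hπ.analyticAt_comp (hF k hk).1) hnc
  exact ⟨π, 𝒲, ⟨hπ, fun i => hFπ (.inr i) (by simp)⟩, fun k hk => hFπ (.inl k) (by simpa)⟩

/-- The germ `g` becomes a normal crossing along a lift of `𝒱` whose coordinates other than `none`
are normal crossings as well. The last condition lets functions of these coordinates be carried
along in the induction on the order of `g` in the variable `none`. -/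
def HasUniformization (𝒱 : Ultrafilter (Option ι → ℝ)) (g : (Option ι → ℝ) → ℝ) : Prop :=
  ∃ (π : (Option ι → ℝ) → Option ι → ℝ) (𝒲 : Ultrafilter (Option ι → ℝ)), IsLift 𝒱 π 𝒲 ∧
    IsNormalCrossing (fun x => g (π x)) ∧ ∀ i, IsNormalCrossing fun x => π x (some i)

/-- The order of vanishing at `0` of the restriction of `g` to the `none` axis. -/
noncomputable def verticalOrder (g : (Option ι → ℝ) → ℝ) : ℕ∞ :=
  analyticOrderAt (fun t : ℝ => g (Option.elim' t 0)) 0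

section

variable {𝒱 𝒱' : Ultrafilter (Option ι → ℝ)} {g : (Option ι → ℝ) → ℝ}

theorem IsLift.isNormalCrossing_comp_some {π : (Option ι → ℝ) → Option ι → ℝ}
    (h : IsLift 𝒱 π 𝒱') (hπ : ∀ i, IsNormalCrossing fun x => π x (some i)) {f : (ι → ℝ) → ℝ}
    (hf : IsNormalCrossing f) : IsNormalCrossing fun x => f (π x ∘ some) :=
  hf.comp ((analyticAt_comp_some _).comp h.analyticAt) (by rw [h.map_zero]; rfl) hπ

theorem HasUniformization.of_isLift {σ : (Option ι → ℝ) → Option ι → ℝ} (h : IsLift 𝒱 σ 𝒱')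
    {τ : (ι → ℝ) → ι → ℝ} (hσ : ∀ x, σ x ∘ some = τ (x ∘ some))
    (hτ : ∀ i, IsNormalCrossing fun y => τ y i)
    (hg : HasUniformization 𝒱' fun x => g (σ x)) : HasUniformization 𝒱 g := by
  obtain ⟨π, 𝒲, hπ, hgπ, hcoord⟩ := hg
  refine ⟨_, 𝒲, h.comp hπ, hgπ, fun i => ?_⟩
  exact (hπ.isNormalCrossing_comp_some hcoord (hτ i)).congr <|
    .of_forall fun x => congrFun (hσ (π x)) i

end

section Shear

/-- The shear `z ↦ z + φ y` of the variable `z = x none` over the remaining variables `y`. -/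
def shear (φ : (ι → ℝ) → ℝ) (x : Option ι → ℝ) : Option ι → ℝ :=
  Option.elim' (x none + φ (x ∘ some)) (x ∘ some)

theorem exists_isLift_shear {𝒱 : Ultrafilter (Option ι → ℝ)}
    (h𝒱 : (𝒱 : Filter (Option ι → ℝ)) ≤ 𝓝 0) {φ : (ι → ℝ) → ℝ} (hφ : AnalyticAt ℝ φ 0)
    (hφ0 : φ 0 = 0) : ∃ 𝒲, IsLift 𝒱 (shear φ) 𝒲 := by
  have han : ∀ ψ : (ι → ℝ) → ℝ, AnalyticAt ℝ ψ 0 → AnalyticAt ℝ (shear ψ) 0 := fun ψ hψ =>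
    analyticAt_optionElim ((analyticAt_coord none 0).add (analyticAt_apply_comp_some hψ))
      (analyticAt_comp_some 0)
  have hzero : ∀ ψ : (ι → ℝ) → ℝ, ψ 0 = 0 → shear ψ 0 = 0 := fun ψ hψ => by
    change Option.elim' (0 + ψ 0) (0 : ι → ℝ) = 0
    rw [hψ, add_zero, optionElim_zero]
  refine ⟨_, .of_section (s := shear fun y => -φ y) (han φ hφ) (hzero φ hφ0) ?_
    (.of_forall fun x => ?_)⟩
  · have := (han _ hφ.neg).continuousAt.tendsto.mono_left h𝒱
    rwa [hzero _ (by simp [hφ0])] at this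
  · rw [← optionElim_comp_some x]
    ext (_ | _) <;> simp [shear, Function.comp_def]

theorem exists_shear_eq_sum {d : ℕ} {g : (Option ι → ℝ) → ℝ} (hg : AnalyticAt ℝ g 0)
    (hd : verticalOrder g = (d + 1 : ℕ)) :
    ∃ (φ : (ι → ℝ) → ℝ) (J : Finset ℕ) (c : ℕ → (ι → ℝ) → ℝ) (u : (Option ι → ℝ) → ℝ),
      AnalyticAt ℝ φ 0 ∧ φ 0 = 0 ∧ (∀ j ∈ J, j < d ∧ AnalyticAt ℝ (c j) 0 ∧ c j 0 = 0 ∧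
        ¬ ∀ᶠ y in 𝓝 0, c j y = 0) ∧ AnalyticAt ℝ u 0 ∧ u 0 ≠ 0 ∧
      ∀ᶠ x in 𝓝 0, g (shear φ x) =
        ∑ j ∈ J, c j (x ∘ some) * x none ^ j + x none ^ (d + 1) * u x := by
  classical
  have hsmul : ∀ t : ℝ, t • Option.elim' 1 0 = Option.elim' t (0 : ι → ℝ) := fun t => by
    ext (_ | _) <;> simp
  obtain ⟨φ, c, u, hφ, hφ0, hc, hc0, hu, hu0, hsum⟩ := exists_tschirnhaus
    (l := ContinuousLinearMap.proj (R := ℝ) (φ := fun _ : Option ι => ℝ) none)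
    (e := Option.elim' 1 0) hg rfl (by simpa only [hsmul, verticalOrder] using hd)
  have hproj : ∀ x : Option ι → ℝ, x - x none • Option.elim' 1 0 = Option.elim' 0 (x ∘ some) :=
    fun x => by ext (_ | _) <;> simp
  have hinc : AnalyticAt ℝ (fun y : ι → ℝ => Option.elim' (0 : ℝ) y) 0 :=
    analyticAt_optionElim analyticAt_const analyticAt_id
  refine ⟨fun y => φ (Option.elim' 0 y),
    (Finset.range d).filter fun j => ¬ ∀ᶠ y in 𝓝 0, c j (Option.elim' 0 y) = 0,
    fun j y => c j (Option.elim' 0 y), u, hφ.comp_of_eq hinc optionElim_zero,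
    (congrArg φ optionElim_zero).trans hφ0, fun j hj => ?_, hu, hu0, ?_⟩
  · obtain ⟨hjd, hj⟩ := Finset.mem_filter.1 hj
    rw [Finset.mem_range] at hjd
    exact ⟨hjd, (hc j).comp_of_eq hinc optionElim_zero,
      (congrArg (c j) optionElim_zero).trans (hc0 j hjd), hj⟩
  · have hvanish : ∀ᶠ y in 𝓝 (0 : ι → ℝ), ∀ j ∈ Finset.range d,
        (∀ᶠ y in 𝓝 0, c j (Option.elim' 0 y) = 0) → c j (Option.elim' 0 y) = 0 :=
      (eventually_all_finset _).2 fun j _ => eventually_imp_distrib_left.2 id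
    filter_upwards [hsum, tendsto_comp_some.eventually hvanish] with x hx hvx
    simp only [ContinuousLinearMap.proj_apply, hproj] at hx
    rw [← Finset.sum_filter_of_ne (p := fun j => ¬ ∀ᶠ y in 𝓝 0, c j (Option.elim' 0 y) = 0)
      fun j hj hne h => hne (by rw [hvx j hj h, zero_mul])] at hx
    refine Eq.trans (congrArg g ?_) hx
    ext (_ | _) <;> simp [shear]

end Shear

end LocalUniformization

section Uniformization

variable {ι : Type*} [Fintype ι]

/-- The form of `g` after a Tschirnhaus shear, once its coefficients have been made powers of a
common normal crossing `w` up to factors `q j` of which at least one is a unit. With `z = x none`,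
`g` is then homogeneous of degree `d + 1` in `z` and `w` up to the `q j` and the unit `u`. -/
structure IsWeightedTschirnhaus (g : (Option ι → ℝ) → ℝ) (d : ℕ) (J : Finset ℕ) (w : (ι → ℝ) → ℝ)
    (q : ℕ → (ι → ℝ) → ℝ) (u : (Option ι → ℝ) → ℝ) : Prop where
  lt : ∀ j ∈ J, j < d
  isNormalCrossing : IsNormalCrossing w
  map_zero : w 0 = 0
  analyticAt_coeff : ∀ j ∈ J, AnalyticAt ℝ (q j) 0
  exists_coeff_ne_zero : ∃ k ∈ J, q k 0 ≠ 0
  analyticAt_unit : AnalyticAt ℝ u 0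
  unit_ne_zero : u 0 ≠ 0
  eventually_eq : ∀ᶠ x in 𝓝 0, g x =
    ∑ j ∈ J, w (x ∘ some) ^ (d + 1 - j) * q j (x ∘ some) * x none ^ j + x none ^ (d + 1) * u x

/-- The chart `z = w(y) (c + z')` of the blow-up of `z = w(y) = 0`, where `z = x none` and `y` are
the other variables, centred where `z / w(y) = c`. -/
def weightedChart (w : (ι → ℝ) → ℝ) (c : ℝ) (x : Option ι → ℝ) : Option ι → ℝ :=
  Option.elim' (w (x ∘ some) * (c + x none)) (x ∘ some)

theorem exists_isLift_weightedChart {𝒱 : Ultrafilter (Option ι → ℝ)}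
    (h𝒱 : (𝒱 : Filter (Option ι → ℝ)) ≤ 𝓝 0) {w : (ι → ℝ) → ℝ} (hw : AnalyticAt ℝ w 0)
    (hw0 : w 0 = 0) (h : (fun x => x none) =O[𝒱] fun x => w (x ∘ some)) :
    ∃ c 𝒲, IsLift 𝒱 (weightedChart w c) 𝒲 := by
  obtain ⟨c, hc⟩ := exists_tendsto_div_of_isBigO h
  refine ⟨c, _, .of_section (s := fun x => Option.elim' (x none / w (x ∘ some) - c) (x ∘ some))
    ?_ ?_ ?_ ?_⟩
  · exact analyticAt_optionElim ((analyticAt_apply_comp_some hw).mul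
      (analyticAt_const.add (analyticAt_coord none 0))) (analyticAt_comp_some 0)
  · change Option.elim' (w 0 * (c + 0)) (0 : ι → ℝ) = 0
    rw [hw0, zero_mul, optionElim_zero]
  · refine tendsto_nhds_zero_option.2 ⟨?_, tendsto_comp_some.mono_left h𝒱⟩
    simpa using hc.sub_const c
  · obtain ⟨C, hC⟩ := h.bound
    filter_upwards [hC] with x hx
    have hcancel : w (x ∘ some) * (x none / w (x ∘ some)) = x none := by
      refine mul_div_cancel_of_imp' fun h0 => ?_
      simpa [h0] using hx
    refine Eq.trans ?_ (optionElim_comp_some x)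
    change Option.elim' (w (x ∘ some) * (c + (x none / w (x ∘ some) - c))) (x ∘ some) = _
    rw [add_sub_cancel, hcancel]

theorem analyticOrderAt_sum_add_lt {d k : ℕ} {J : Finset ℕ} (hJ : ∀ j ∈ J, j < d) (hk : k ∈ J)
    {a : ℕ → ℝ} (hak : a k ≠ 0) {v : ℝ} (hv : v ≠ 0) (c : ℝ) :
    analyticOrderAt (fun t => ∑ j ∈ J, a j * (c + t) ^ j + (c + t) ^ (d + 1) * v) 0 <
      (d + 1 : ℕ) := by
  set p : Polynomial ℝ := ∑ j ∈ J, Polynomial.C (a j) * Polynomial.X ^ j +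
    Polynomial.X ^ (d + 1) * Polynomial.C v
  have hcoeff : ∀ m, p.coeff m = (if m ∈ J then a m else 0) + if m = d + 1 then v else 0 := by
    intro m
    simp only [p, Polynomial.coeff_add, Polynomial.finsetSum_coeff, Polynomial.coeff_C_mul,
      Polynomial.coeff_X_pow, Polynomial.coeff_mul_C]
    simp
  have hnotMem : ∀ m, d ≤ m → m ∉ J := fun m hm hmJ => (hJ m hmJ).not_ge hm
  have hdeg : p.natDegree = d + 1 := by
    refine Polynomial.natDegree_eq_of_le_of_coeff_ne_zero
      (Polynomial.natDegree_le_iff_coeff_eq_zero.2 fun m hm => ?_) ?_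
    · simp [hcoeff, hnotMem m (by omega), hm.ne']
    · simpa [hcoeff, hnotMem (d + 1) (by omega)] using hv
  have hlt := rootMultiplicity_lt_natDegree hdeg (by simp [hcoeff, hnotMem d le_rfl]) (hJ k hk)
    (by simpa [hcoeff, hk, ((hJ k hk).trans (Nat.lt_succ_self d)).ne] using hak) c
  have hp0 : p ≠ 0 := by
    rintro h0
    simp [h0] at hdeg
  have heval := analyticOrderAt_eval_add hp0 c
  simp only [p, Polynomial.eval_add, Polynomial.eval_finsetSum, Polynomial.eval_mul,
    Polynomial.eval_C, Polynomial.eval_pow, Polynomial.eval_X] at heval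
  rw [heval]
  exact_mod_cast hdeg ▸ hlt

theorem sum_weighted_eq_pow_mul {d : ℕ} {J : Finset ℕ} (hJ : ∀ j ∈ J, j < d) (a : ℕ → ℝ)
    (w z v : ℝ) :
    ∑ j ∈ J, w ^ (d + 1 - j) * a j * (w * z) ^ j + (w * z) ^ (d + 1) * v =
      w ^ (d + 1) * (∑ j ∈ J, a j * z ^ j + z ^ (d + 1) * v) := by
  rw [mul_add, Finset.mul_sum, mul_pow, mul_assoc]
  refine congrArg (· + _) (Finset.sum_congr rfl fun j hj => ?_)
  rw [← pow_sub_mul_pow w ((hJ j hj).le.trans d.le_succ), mul_pow]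
  ring

variable {𝒱 : Ultrafilter (Option ι → ℝ)} {g : (Option ι → ℝ) → ℝ} {d : ℕ} {J : Finset ℕ}
  {w : (ι → ℝ) → ℝ} {q : ℕ → (ι → ℝ) → ℝ} {u : (Option ι → ℝ) → ℝ}

namespace IsWeightedTschirnhaus

theorem exists_comp_weightedChart_eq (h : IsWeightedTschirnhaus g d J w q u)
    {c : ℝ} {𝒲 : Ultrafilter (Option ι → ℝ)} (hlift : IsLift 𝒱 (weightedChart w c) 𝒲) :
    ∃ G : (Option ι → ℝ) → ℝ, AnalyticAt ℝ G 0 ∧ verticalOrder G < (d + 1 : ℕ) ∧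
      ∀ᶠ x in 𝓝 0, g (weightedChart w c x) = w (x ∘ some) ^ (d + 1) * G x := by
  have hz : AnalyticAt ℝ (fun x : Option ι → ℝ => c + x none) 0 :=
    analyticAt_const.add (analyticAt_coord none 0)
  refine ⟨fun x => ∑ j ∈ J, q j (x ∘ some) * (c + x none) ^ j +
    (c + x none) ^ (d + 1) * u (weightedChart w c x), ?_, ?_, ?_⟩
  · exact (Finset.analyticAt_fun_sum _ fun j hj =>
      (analyticAt_apply_comp_some (h.analyticAt_coeff j hj)).mul (hz.pow j)).add
        ((hz.pow _).mul (hlift.analyticAt_comp h.analyticAt_unit))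
  · obtain ⟨k, hk, hqk⟩ := h.exists_coeff_ne_zero
    refine lt_of_eq_of_lt ?_ (analyticOrderAt_sum_add_lt h.lt hk
      (a := fun j => q j 0) hqk h.unit_ne_zero c)
    refine congrArg (analyticOrderAt · 0) (funext fun t => ?_)
    have hchart : weightedChart w c (Option.elim' t 0) = 0 := by
      change Option.elim' (w 0 * (c + t)) (0 : ι → ℝ) = 0
      rw [h.map_zero, zero_mul, optionElim_zero]
    beta_reduce
    rw [hchart]
    rfl
  · filter_upwards [hlift.tendsto.eventually h.eventually_eq] with x hx
    rw [hx]
    exact sum_weighted_eq_pow_mul h.lt (fun j => q j (x ∘ some)) _ _ _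

theorem hasUniformization_of_isBigO (h : IsWeightedTschirnhaus g d J w q u)
    (h𝒱 : (𝒱 : Filter (Option ι → ℝ)) ≤ 𝓝 0)
    (ih : ∀ ⦃𝒲 : Ultrafilter (Option ι → ℝ)⦄, (𝒲 : Filter (Option ι → ℝ)) ≤ 𝓝 0 →
      ∀ ⦃G : (Option ι → ℝ) → ℝ⦄, AnalyticAt ℝ G 0 → verticalOrder G < (d + 1 : ℕ) →
        HasUniformization 𝒲 G)
    (hO : (fun x => x none) =O[𝒱] fun x => w (x ∘ some)) : HasUniformization 𝒱 g := by
  obtain ⟨c, 𝒲, hlift⟩ :=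
    exists_isLift_weightedChart h𝒱 h.isNormalCrossing.analyticAt h.map_zero hO
  obtain ⟨G, hG, hord, hgG⟩ := h.exists_comp_weightedChart_eq hlift
  obtain ⟨π, 𝒳, hπ, hGπ, hcoord⟩ := ih hlift.le_nhds hG hord
  refine .of_isLift hlift (fun x => rfl) .coord ⟨π, 𝒳, hπ, ?_, hcoord⟩
  exact (((hπ.isNormalCrossing_comp_some hcoord h.isNormalCrossing).pow (d + 1)).mul hGπ).congr
    (hπ.tendsto.eventually hgG)

theorem isNormalCrossing_comp (h : IsWeightedTschirnhaus g d J w q u)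
    {π : (Option ι → ℝ) → Option ι → ℝ} {𝒲 : Ultrafilter (Option ι → ℝ)}
    (hπ : IsMonomialLift 𝒱 π 𝒲) {r : (Option ι → ℝ) → ℝ} (hr : AnalyticAt ℝ r 0) (hr0 : r 0 = 0)
    (hwr : ∀ᶠ x in 𝓝 0, w (π x ∘ some) = π x none * r x) :
    IsNormalCrossing fun x => g (π x) := by
  have hunit : AnalyticAt ℝ
      (fun x => ∑ j ∈ J, r x ^ (d + 1 - j) * q j (π x ∘ some) + u (π x)) 0 :=
    (Finset.analyticAt_fun_sum _ fun j hj => (hr.pow _).mul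
      (hπ.analyticAt_comp (analyticAt_apply_comp_some (h.analyticAt_coeff j hj)))).add
        (hπ.analyticAt_comp h.analyticAt_unit)
  refine (((hπ.coord none).pow (d + 1)).mul (.of_ne_zero hunit ?_)).congr ?_
  · rw [Finset.sum_eq_zero, zero_add, hπ.map_zero]
    · exact h.unit_ne_zero
    · intro j hj
      rw [hr0, zero_pow (Nat.sub_ne_zero_of_lt ((h.lt j hj).trans d.lt_succ_self)), zero_mul]
  · filter_upwards [hπ.tendsto.eventually h.eventually_eq, hwr] with x hgx hwx
    rw [hgx, hwx, mul_add, Finset.mul_sum]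
    refine congrArg (· + _) (Finset.sum_congr rfl fun j hj => ?_)
    rw [← pow_sub_mul_pow (π x none) ((h.lt j hj).le.trans d.le_succ), mul_pow]
    ring

theorem hasUniformization_of_not_isBigO (h : IsWeightedTschirnhaus g d J w q u)
    (h𝒱 : (𝒱 : Filter (Option ι → ℝ)) ≤ 𝓝 0)
    (hO : ¬ (fun x => x none) =O[𝒱] fun x => w (x ∘ some)) : HasUniformization 𝒱 g := by
  obtain ⟨π, 𝒲, hπ, hdvd⟩ :=
    (IsNormalCrossing.coord none).exists_normalCrossingDvd_comp h𝒱 h.isNormalCrossing.comp_some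
  have hnot : ¬ (fun x => π x none) =O[𝓝 0] fun x => w (π x ∘ some) := fun hO' =>
    hO ((hπ.isBigO_comp_iff (f := fun x => x none)).1 (hO'.mono hπ.le_nhds))
  rcases hdvd with ⟨r, hr, hwr⟩ | ⟨r, hr, hwr⟩
  · refine ⟨π, 𝒲, hπ.toIsLift, h.isNormalCrossing_comp hπ hr.analyticAt ?_ hwr,
      fun i => hπ.coord (some i)⟩
    by_contra hr0
    refine hnot ?_
    have hinv : (fun x => (r x)⁻¹) =O[𝓝 0] fun _ => (1 : ℝ) :=
      (hr.analyticAt.continuousAt.inv₀ hr0).tendsto.isBigO_one ℝ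
    refine ((Asymptotics.isBigO_refl (fun x => w (π x ∘ some)) _).mul hinv).congr' ?_ (by simp)
    filter_upwards [hwr, hr.analyticAt.continuousAt.eventually_ne hr0] with x hx hrx
    rw [hx, mul_inv_cancel_right₀ hrx]
  · refine (hnot ?_).elim
    have hbdd : r =O[𝓝 0] fun _ => (1 : ℝ) := hr.analyticAt.continuousAt.tendsto.isBigO_one ℝ
    exact ((Asymptotics.isBigO_refl (fun x => w (π x ∘ some)) _).mul hbdd).congr'
      (hwr.mono fun x hx => hx.symm) (by simp)

end IsWeightedTschirnhaus

end Uniformization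

section Induction

variable {ι : Type*} [Fintype ι]

theorem LocalUniformization.exists_isWeightedTschirnhaus (h : LocalUniformization ι)
    {𝒱 : Ultrafilter (Option ι → ℝ)} (h𝒱 : (𝒱 : Filter (Option ι → ℝ)) ≤ 𝓝 0) {d : ℕ}
    {J : Finset ℕ} (hJ : J.Nonempty) {c : ℕ → (ι → ℝ) → ℝ} {u g : (Option ι → ℝ) → ℝ}
    (hc : ∀ j ∈ J, j < d ∧ AnalyticAt ℝ (c j) 0 ∧ c j 0 = 0 ∧ ¬ ∀ᶠ y in 𝓝 0, c j y = 0)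
    (hu : AnalyticAt ℝ u 0) (hu0 : u 0 ≠ 0)
    (hg : ∀ᶠ x in 𝓝 0,
      g x = ∑ j ∈ J, c j (x ∘ some) * x none ^ j + x none ^ (d + 1) * u x) :
    ∃ (τ : (ι → ℝ) → ι → ℝ) (𝒲 : Ultrafilter (Option ι → ℝ)) (w : (ι → ℝ) → ℝ)
      (q : ℕ → (ι → ℝ) → ℝ) (v : (Option ι → ℝ) → ℝ),
      IsMonomialLift 𝒱 (fun x => Option.elim' (x none) (τ (x ∘ some))) 𝒲 ∧
      (∀ i, IsNormalCrossing fun y => τ y i) ∧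
      IsWeightedTschirnhaus (fun x => g (Option.elim' (x none) (τ (x ∘ some)))) d J w q v := by
  obtain ⟨π, 𝒳, hπ, hcπ⟩ := h.exists_isMonomialLift (𝒱 := 𝒱.map (· ∘ some))
    (tendsto_comp_some.mono_left h𝒱) J (fun j hj => (hc j hj).2.1) fun j hj => (hc j hj).2.2.2
  have hlt : ∀ j ∈ J, j < d + 1 := fun j hj => (hc j hj).1.trans d.lt_succ_self
  obtain ⟨ρ, 𝒴, w, q, hρ, hw, hcq, k, hk, hqk⟩ := IsNormalCrossing.exists_common_root hπ.le_nhds hJ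
    hcπ (e := fun j => d + 1 - j) fun j hj => Nat.sub_ne_zero_of_lt (hlt j hj)
  obtain ⟨𝒲, hlift⟩ := IsMonomialLift.exists_option h𝒱 (hπ.comp hρ)
  have hw0 : w 0 = 0 := by
    have hck := (hcq k hk).2.self_of_nhds
    rw [hρ.map_zero, hπ.map_zero, (hc k hk).2.2.1, eq_comm, mul_eq_zero] at hck
    exact eq_zero_of_pow_eq_zero (hck.resolve_right hqk)
  refine ⟨_, 𝒲, w, q, _, hlift, (hπ.comp hρ).coord, fun j hj => (hc j hj).1, hw, hw0,
    fun j hj => (hcq j hj).1, ⟨k, hk, hqk⟩, hlift.analyticAt_comp hu, by rwa [hlift.map_zero], ?_⟩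
  have hcw : ∀ᶠ y in 𝓝 (0 : ι → ℝ), ∀ j ∈ J, c j (π (ρ y)) = w y ^ (d + 1 - j) * q j y :=
    (eventually_all_finset J).2 fun j hj => (hcq j hj).2
  filter_upwards [hlift.tendsto.eventually hg, tendsto_comp_some.eventually hcw] with x hgx hcx
  rw [hgx]
  exact congrArg (· + _) (Finset.sum_congr rfl fun j hj => congrArg (· * _) (hcx j hj))

theorem LocalUniformization.hasUniformization_of_verticalOrder (h : LocalUniformization ι) (d : ℕ) :
    ∀ ⦃𝒱 : Ultrafilter (Option ι → ℝ)⦄, (𝒱 : Filter (Option ι → ℝ)) ≤ 𝓝 0 →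
      ∀ ⦃g : (Option ι → ℝ) → ℝ⦄, AnalyticAt ℝ g 0 → verticalOrder g = d →
        HasUniformization 𝒱 g := by
  induction d using Nat.strong_induction_on with | _ d ih
  intro 𝒱 h𝒱 g hg hd
  rcases d with _ | d
  · have hg0 : g 0 ≠ 0 := by
      have hline : AnalyticAt ℝ (fun t : ℝ => g (Option.elim' t 0)) 0 :=
        hg.comp_of_eq (analyticAt_optionElim analyticAt_id analyticAt_const) optionElim_zero
      simpa only [optionElim_zero] using hline.analyticOrderAt_eq_zero.1 hd
    exact ⟨_, 𝒱, .refl h𝒱, .of_ne_zero hg hg0, fun i => .coord (some i)⟩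
  obtain ⟨φ, J, c, u, hφ, hφ0, hc, hu, hu0, hgsum⟩ := exists_shear_eq_sum hg hd
  obtain ⟨𝒲, hshear⟩ := exists_isLift_shear h𝒱 hφ hφ0
  refine .of_isLift hshear (τ := fun y => y) (fun x => rfl) .coord ?_
  rcases J.eq_empty_or_nonempty with rfl | hJ
  · refine ⟨_, 𝒲, .refl hshear.le_nhds, ?_, fun i => .coord (some i)⟩
    refine (((IsNormalCrossing.coord none).pow (d + 1)).mul (.of_ne_zero hu hu0)).congr ?_
    simpa using hgsum
  obtain ⟨τ, 𝒳, w, q, v, hlift, hτ, hform⟩ :=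
    h.exists_isWeightedTschirnhaus hshear.le_nhds hJ hc hu hu0 hgsum
  refine .of_isLift hlift.toIsLift (τ := τ) (fun x => rfl) hτ ?_
  by_cases hO : (fun x : Option ι → ℝ => x none) =O[𝒳] fun x => w (x ∘ some)
  · refine hform.hasUniformization_of_isBigO hlift.le_nhds (fun 𝒴 h𝒴 G hG hord => ?_) hO
    lift verticalOrder G to ℕ using hord.ne_top with e he
    exact ih e (by exact_mod_cast hord) h𝒴 hG he.symm
  · exact hform.hasUniformization_of_not_isBigO hlift.le_nhds hO

theorem exists_not_eventually_smul_eq_zero {E : Type*} [NormedAddCommGroup E] [NormedSpace ℝ E]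
    {f : E → ℝ} (hf : AnalyticAt ℝ f 0) (hf0 : ¬ ∀ᶠ x in 𝓝 0, f x = 0) :
    ∃ v : E, ¬ ∀ᶠ t in 𝓝 (0 : ℝ), f (t • v) = 0 := by
  contrapose! hf0
  obtain ⟨r, hr, hball⟩ := Metric.eventually_nhds_iff_ball.1 hf.eventually_analyticAt
  filter_upwards [Metric.ball_mem_nhds (0 : E) hr] with v hv
  have hseg : AnalyticOnNhd ℝ (fun t : ℝ => f (t • v)) (Set.Icc 0 1) := fun t ht =>
    AnalyticAt.fun_comp (f := fun t : ℝ => t • v)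
      (hball _ ((convex_ball (0 : E) r).smul_mem_of_zero_mem (Metric.mem_ball_self hr) hv ht))
      (analyticAt_id.smul analyticAt_const)
  simpa using hseg.eqOn_zero_of_preconnected_of_eventuallyEq_zero isPreconnected_Icc
    (Set.left_mem_Icc.2 zero_le_one) (hf0 v) (Set.right_mem_Icc.2 zero_le_one)

theorem exists_continuousLinearEquiv_verticalOrder_ne_top {f : (Option ι → ℝ) → ℝ}
    (hf : AnalyticAt ℝ f 0) (hf0 : ¬ ∀ᶠ x in 𝓝 0, f x = 0) :
    ∃ A : (Option ι → ℝ) ≃L[ℝ] (Option ι → ℝ), verticalOrder (fun x => f (A x)) ≠ ⊤ := by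
  by_cases h0 : f 0 = 0
  · obtain ⟨v, hv⟩ := exists_not_eventually_smul_eq_zero hf hf0
    have hv0 : v ≠ 0 := by
      rintro rfl
      simp [h0] at hv
    obtain ⟨A, hA⟩ := SeparatingDual.exists_continuousLinearEquiv_apply_eq (R := ℝ)
      (x := Option.elim' 1 (0 : ι → ℝ)) (fun h => one_ne_zero (congrFun h none)) hv0
    refine ⟨A, fun htop => hv ((analyticOrderAt_eq_top.1 htop).mono fun t ht => ?_)⟩
    rw [← hA, ← map_smul, ← ht]
    refine congrArg (fun x => f (A x)) ?_
    ext (_ | _) <;> simp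
  · refine ⟨.refl ℝ _, fun htop => h0 ?_⟩
    simpa [optionElim_zero] using (analyticOrderAt_eq_top.1 htop).self_of_nhds

theorem exists_isLift_continuousLinearEquiv {𝒱 : Ultrafilter (ι → ℝ)}
    (h𝒱 : (𝒱 : Filter (ι → ℝ)) ≤ 𝓝 0) {κ : Type*} [Fintype κ] (A : (κ → ℝ) ≃L[ℝ] (ι → ℝ)) :
    ∃ 𝒲, IsLift 𝒱 A 𝒲 :=
  ⟨_, .of_section (s := A.symm) (A.toContinuousLinearMap.analyticAt 0) (map_zero A)
    (by simpa using (A.symm.continuous.tendsto 0).mono_left h𝒱) (by simp)⟩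

namespace LocalUniformization

theorem option (h : LocalUniformization ι) : LocalUniformization (Option ι) := by
  intro 𝒱 h𝒱 f hf hf0
  obtain ⟨A, hA⟩ := exists_continuousLinearEquiv_verticalOrder_ne_top hf hf0
  obtain ⟨𝒲, hlift⟩ := exists_isLift_continuousLinearEquiv h𝒱 A
  lift verticalOrder (fun x => f (A x)) to ℕ using hA with d hd
  obtain ⟨π, 𝒳, hπ, hnc, -⟩ :=
    h.hasUniformization_of_verticalOrder d hlift.le_nhds (hlift.analyticAt_comp hf) hd.symm
  exact ⟨_, 𝒳, hlift.comp hπ, hnc⟩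

theorem reindex {κ : Type*} [Fintype κ] (e : ι ≃ κ) (h : LocalUniformization ι) :
    LocalUniformization κ := by
  intro 𝒱 h𝒱 f hf hf0
  let A : (ι → ℝ) ≃L[ℝ] (κ → ℝ) := .piCongrLeft ℝ (fun _ => ℝ) e
  obtain ⟨𝒲, hA⟩ := exists_isLift_continuousLinearEquiv h𝒱 A
  have hfA : ¬ ∀ᶠ x in 𝓝 0, f (A x) = 0 := fun h0 => hf0 <| by
    have hsymm : Tendsto A.symm (𝓝 0) (𝓝 0) := by simpa using A.symm.continuous.tendsto 0
    simpa using hsymm.eventually h0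
  obtain ⟨π, 𝒳, hπ, hnc⟩ := h hA.le_nhds (hA.analyticAt_comp hf) hfA
  obtain ⟨𝒴, hsymm⟩ := exists_isLift_continuousLinearEquiv hπ.le_nhds A.symm
  exact ⟨_, 𝒴, (hA.comp hπ).comp hsymm,
    hnc.comp hsymm.analyticAt hsymm.map_zero fun i => .coord (e i)⟩

theorem pempty : LocalUniformization PEmpty := fun 𝒱 h𝒱 f hf hf0 =>
  ⟨_, 𝒱, .refl h𝒱, .of_ne_zero hf fun h0 => hf0 <| .of_forall fun x => by
    rwa [Subsingleton.elim x 0]⟩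

end LocalUniformization

theorem localUniformization (ι : Type) [Fintype ι] : LocalUniformization ι := by
  refine Fintype.induction_empty_option (P := fun α [Fintype α] => LocalUniformization α)
    (fun α β _ e h => ?_) .pempty (fun α _ h => h.option) ι
  let := Fintype.ofEquiv β e.symm
  exact .reindex e (by convert h)

end Induction

section LojasiewiczBound

/-- The Łojasiewicz gradient inequality `|F| ^ (1 - ζ) ≤ C * p` along the filter `l`, where `p` is
the norm of some gradient of `F`. -/
def HasLojasiewiczBound {α : Type*} (l : Filter α) (F p : α → ℝ) : Prop :=
  ∃ ζ ∈ Set.Ioc (0 : ℝ) (1 / 2), ∃ C > 0, ∀ᶠ x in l, |F x| ^ (1 - ζ) ≤ C * p x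

namespace HasLojasiewiczBound

variable {α : Type*} {l l₁ l₂ : Filter α} {F p : α → ℝ}

theorem mono (h : HasLojasiewiczBound l₂ F p) (hl : l₁ ≤ l₂) : HasLojasiewiczBound l₁ F p := by
  obtain ⟨ζ, hζ, C, hC, h⟩ := h
  exact ⟨ζ, hζ, C, hC, h.filter_mono hl⟩

theorem of_eventually_eq_zero (hp : ∀ x, 0 ≤ p x) (h : ∀ᶠ x in l, F x = 0) :
    HasLojasiewiczBound l F p := by
  refine ⟨1 / 2, ⟨by norm_num, le_rfl⟩, 1, one_pos, h.mono fun x hx => ?_⟩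
  rw [hx, abs_zero, Real.zero_rpow (by norm_num), one_mul]
  exact hp x

theorem sup (hp : ∀ x, 0 ≤ p x) (hF : Tendsto F (l₁ ⊔ l₂) (𝓝 0))
    (h₁ : HasLojasiewiczBound l₁ F p) (h₂ : HasLojasiewiczBound l₂ F p) :
    HasLojasiewiczBound (l₁ ⊔ l₂) F p := by
  obtain ⟨ζ₁, hζ₁, C₁, hC₁, h₁⟩ := h₁
  obtain ⟨ζ₂, hζ₂, C₂, -, h₂⟩ := h₂
  have hsmall : ∀ᶠ x in l₁ ⊔ l₂, |F x| ≤ 1 :=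
    (by simpa using hF.abs : Tendsto (fun x => |F x|) _ (𝓝 0)).eventually_le_const one_pos
  have hweaken : ∀ {ζ C x}, ζ ≤ 1 / 2 → min ζ₁ ζ₂ ≤ ζ → C ≤ max C₁ C₂ → |F x| ≤ 1 →
      |F x| ^ (1 - ζ) ≤ C * p x → |F x| ^ (1 - min ζ₁ ζ₂) ≤ max C₁ C₂ * p x := by
    intro ζ C x hζ hζ' hC hx h
    calc |F x| ^ (1 - min ζ₁ ζ₂) ≤ |F x| ^ (1 - ζ) :=
          Real.rpow_le_rpow_of_exponent_ge' (abs_nonneg _) hx (by linarith) (by linarith)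
      _ ≤ C * p x := h
      _ ≤ max C₁ C₂ * p x := mul_le_mul_of_nonneg_right hC (hp x)
  refine ⟨min ζ₁ ζ₂, ⟨lt_min hζ₁.1 hζ₂.1, min_le_of_left_le hζ₁.2⟩, max C₁ C₂,
    lt_max_of_lt_left hC₁, eventually_sup.2 ⟨?_, ?_⟩⟩
  · filter_upwards [h₁, (eventually_sup.1 hsmall).1] with x hx hx1
    exact hweaken hζ₁.2 (min_le_left _ _) (le_max_left _ _) hx1 hx
  · filter_upwards [h₂, (eventually_sup.1 hsmall).2] with x hx hx1
    exact hweaken hζ₂.2 (min_le_right _ _) (le_max_right _ _) hx1 hx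

/-- The sets on which the inequality holds form an ideal; an ultrafilter avoiding a proper ideal
would violate the hypothesis. -/
theorem of_forall_ultrafilter (hp : ∀ x, 0 ≤ p x) (hF : Tendsto F l (𝓝 0))
    (h : ∀ 𝓤 : Ultrafilter α, (𝓤 : Filter α) ≤ l → HasLojasiewiczBound 𝓤 F p) :
    HasLojasiewiczBound l F p := by
  by_contra hcon
  let bad : Filter α := comk (fun s => HasLojasiewiczBound (l ⊓ 𝓟 s) F p)
    (.of_eventually_eq_zero hp (by simp))
    (fun t ht s hst => ht.mono (inf_le_inf_left l (principal_mono.2 hst)))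
    (fun s hs t ht => by
      rw [← sup_principal, inf_sup_left]
      exact sup hp (hF.mono_left (sup_le inf_le_left inf_le_left)) hs ht)
  have : bad.NeBot := by
    refine neBot_iff.2 fun hbot => hcon ?_
    have huniv : (∅ : Set α) ∈ bad := hbot ▸ mem_bot
    simpa [bad] using huniv
  have hbad : bad ≤ l := fun s hs => by
    refine mem_comk.2 (.of_eventually_eq_zero hp ?_)
    rw [inf_principal_eq_bot.2 (by rwa [compl_compl])]
    exact eventually_bot
  obtain ⟨ζ, hζ, C, hC, hev⟩ := h (.of bad) ((Ultrafilter.of_le bad).trans hbad)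
  refine Ultrafilter.compl_notMem_iff.2 hev (Ultrafilter.of_le bad (mem_comk.2 ?_))
  rw [compl_compl]
  exact ⟨ζ, hζ, C, hC, mem_inf_of_right (mem_principal_self _)⟩

theorem map {E G : Type*} [NormedAddCommGroup E] [NormedSpace ℝ E] [NormedAddCommGroup G]
    [NormedSpace ℝ G] {π : E → G} {F p : G → ℝ} {x : E} (hπ : ContDiffAt ℝ 1 π x)
    (hF : ContDiffAt ℝ 1 F (π x)) (hp : ∀ y, 0 ≤ p y)
    (hbound : ∀ᶠ y in 𝓝 x, ∀ v,
      |fderiv ℝ F (π y) (fderiv ℝ π y v)| ≤ p (π y) * ‖fderiv ℝ π y v‖)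
    (h : HasLojasiewiczBound (𝓝 x) (fun y => F (π y)) fun y => ‖fderiv ℝ (fun z => F (π z)) y‖) :
    HasLojasiewiczBound (map π (𝓝 x)) F p := by
  obtain ⟨ζ, hζ, C, hC, h⟩ := h
  have hfderiv : ∀ᶠ y in 𝓝 x, ‖fderiv ℝ π y‖ < ‖fderiv ℝ π x‖ + 1 :=
    (hπ.fderiv_right (m := 0) (by simp)).continuousAt.norm.eventually_lt_const (lt_add_one _)
  refine ⟨ζ, hζ, C * (‖fderiv ℝ π x‖ + 1), by positivity, eventually_map.2 ?_⟩
  filter_upwards [h, hfderiv, hbound, hπ.eventually (by simp),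
    hπ.continuousAt.eventually (hF.eventually (by simp))] with y hy hfderivy hboundy hπy hFy
  have hchain : fderiv ℝ (fun z => F (π z)) y = (fderiv ℝ F (π y)).comp (fderiv ℝ π y) :=
    fderiv_comp y (hFy.differentiableAt one_ne_zero) (hπy.differentiableAt one_ne_zero)
  have hnorm : ‖fderiv ℝ (fun z => F (π z)) y‖ ≤ p (π y) * (‖fderiv ℝ π x‖ + 1) := by
    refine ContinuousLinearMap.opNorm_le_bound _ (mul_nonneg (hp _) (by positivity)) fun v => ?_
    calc ‖fderiv ℝ (fun z => F (π z)) y v‖ ≤ p (π y) * ‖fderiv ℝ π y v‖ := by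
          rw [hchain]; exact hboundy v
      _ ≤ p (π y) * ((‖fderiv ℝ π x‖ + 1) * ‖v‖) :=
          mul_le_mul_of_nonneg_left ((fderiv ℝ π y).le_of_opNorm_le hfderivy.le v) (hp _)
      _ = p (π y) * (‖fderiv ℝ π x‖ + 1) * ‖v‖ := (mul_assoc _ _ _).symm
  calc |F (π y)| ^ (1 - ζ) ≤ C * ‖fderiv ℝ (fun z => F (π z)) y‖ := hy
    _ ≤ C * (p (π y) * (‖fderiv ℝ π x‖ + 1)) := mul_le_mul_of_nonneg_left hnorm hC.le
    _ = C * (‖fderiv ℝ π x‖ + 1) * p (π y) := by ring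

end HasLojasiewiczBound

end LojasiewiczBound

section MonomialCase

variable {ι : Type*} [Fintype ι]

theorem hasLineDerivAt_prod_pow [DecidableEq ι] (α : ι → ℕ) (y : ι → ℝ) (i : ι) :
    HasLineDerivAt ℝ (fun x : ι → ℝ => ∏ j, x j ^ α j) ((∏ j, y j ^ α j) * α i) y
      (Pi.single i (y i)) := by
  have hline : ∀ t : ℝ, ∏ j, (y + t • Pi.single i (y i) : ι → ℝ) j ^ α j =
      (∏ j, y j ^ α j) * (1 + t) ^ α i := fun t => by
    have hfactor : ∀ j, (y + t • Pi.single i (y i) : ι → ℝ) j ^ α j =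
        y j ^ α j * if j = i then (1 + t) ^ α i else 1 := fun j => by
      rcases eq_or_ne j i with rfl | hj
      · simp only [Pi.add_apply, Pi.smul_apply, Pi.single_eq_same, smul_eq_mul, if_true, ← mul_pow]
        ring
      · simp [hj]
    simp only [hfactor, Finset.prod_mul_distrib, Finset.prod_ite_eq', Finset.mem_univ, if_true]
  simp only [HasLineDerivAt, hline]
  simpa using (((hasDerivAt_id (0 : ℝ)).const_add 1).pow (α i)).const_mul (∏ j, y j ^ α j)

theorem fderiv_prod_pow_mul_single [DecidableEq ι] {G u : (ι → ℝ) → ℝ} {α : ι → ℕ} {y : ι → ℝ}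
    (hG : DifferentiableAt ℝ G y) (hu : DifferentiableAt ℝ u y)
    (h : ∀ᶠ x in 𝓝 y, G x = (∏ j, x j ^ α j) * u x) (i : ι) :
    fderiv ℝ G y (Pi.single i (y i)) =
      (∏ j, y j ^ α j) * (α i * u y + fderiv ℝ u y (Pi.single i (y i))) := by
  have hprod : HasDerivAt (fun t : ℝ => (∏ j, (y + t • Pi.single i (y i) : ι → ℝ) j ^ α j) *
      u (y + t • Pi.single i (y i))) _ 0 :=
    (hasLineDerivAt_prod_pow α y i).mul (hu.hasFDerivAt.hasLineDerivAt _)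
  have hline : HasLineDerivAt ℝ (fun x => (∏ j, x j ^ α j) * u x) _ y (Pi.single i (y i)) := hprod
  rw [(hG.hasFDerivAt.hasLineDerivAt _).unique (hline.congr_of_eventuallyEq h)]
  simp only [zero_smul, add_zero]
  ring

theorem HasExponent.eventually_abs_le_mul_norm_fderiv {G : (ι → ℝ) → ℝ} {α : ι → ℕ}
    (hG : HasExponent G α) :
    ∀ᶠ y in 𝓝 0, ∀ i, α i ≠ 0 → |G y| ≤ 2 * (‖fderiv ℝ G y‖ * |y i|) := by
  classical
  have hGa : AnalyticAt ℝ G 0 := IsNormalCrossing.analyticAt ⟨α, hG⟩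
  obtain ⟨u, hu, hu0, hGu⟩ := hG
  have hsmall : ∀ᶠ y in 𝓝 0, ‖fderiv ℝ u y‖ * ‖y‖ < |u y| / 2 := by
    refine (hu.fderiv.continuousAt.norm.mul continuousAt_id.norm).tendsto.eventually_lt
      (hu.continuousAt.abs.div_const 2).tendsto ?_
    simpa using hu0
  filter_upwards [hsmall, hGu.eventually_nhds, hu.eventually_analyticAt,
    hGa.eventually_analyticAt] with y hy hGuy huy hGy i hi
  have hsingle : ‖(Pi.single i (y i) : ι → ℝ)‖ = |y i| := by rw [Pi.norm_single, Real.norm_eq_abs]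
  have hdu : |fderiv ℝ u y (Pi.single i (y i))| ≤ |u y| / 2 := by
    calc |fderiv ℝ u y (Pi.single i (y i))| ≤ ‖fderiv ℝ u y‖ * |y i| := by
          simpa only [hsingle, Real.norm_eq_abs] using
            (fderiv ℝ u y).le_opNorm (Pi.single i (y i))
      _ ≤ ‖fderiv ℝ u y‖ * ‖y‖ :=
          mul_le_mul_of_nonneg_left (norm_le_pi_norm y i) (norm_nonneg _)
      _ ≤ |u y| / 2 := hy.le
  have hunit : |u y| ≤ 2 * |α i * u y + fderiv ℝ u y (Pi.single i (y i))| := by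
    have hα : |u y| ≤ |α i * u y| := by
      rw [abs_mul, Nat.abs_cast]
      exact le_mul_of_one_le_left (abs_nonneg _) (Nat.one_le_cast.2 (Nat.one_le_iff_ne_zero.2 hi))
    have htri := abs_sub_abs_le_abs_add (α i * u y) (fderiv ℝ u y (Pi.single i (y i)))
    linarith
  calc |G y| = |∏ j, y j ^ α j| * |u y| := by rw [hGuy.self_of_nhds, abs_mul]
    _ ≤ |∏ j, y j ^ α j| * (2 * |α i * u y + fderiv ℝ u y (Pi.single i (y i))|) :=
        mul_le_mul_of_nonneg_left hunit (abs_nonneg _)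
    _ = 2 * |fderiv ℝ G y (Pi.single i (y i))| := by
        rw [fderiv_prod_pow_mul_single hGy.differentiableAt huy.differentiableAt hGuy, abs_mul]
        ring
    _ ≤ 2 * (‖fderiv ℝ G y‖ * |y i|) := by
        simpa only [hsingle, Real.norm_eq_abs] using mul_le_mul_of_nonneg_left
          ((fderiv ℝ G y).le_opNorm (Pi.single i (y i))) zero_le_two

theorem exists_abs_pow_le_abs_prod_pow {α : ι → ℕ} (hα : α ≠ 0) (y : ι → ℝ) :
    ∃ i, α i ≠ 0 ∧ |y i| ^ (∑ j, α j) ≤ |∏ j, y j ^ α j| := by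
  obtain ⟨i₀, hi₀⟩ := Function.ne_iff.1 hα
  obtain ⟨i, hi, hmin⟩ := Finset.exists_min_image {j | α j ≠ 0} (fun j => |y j|)
    ⟨i₀, by simpa using hi₀⟩
  refine ⟨i, by simpa using hi, ?_⟩
  rw [← Finset.prod_pow_eq_pow_sum, Finset.abs_prod]
  refine Finset.prod_le_prod (fun j _ => by positivity) fun j _ => ?_
  rcases eq_or_ne (α j) 0 with hj | hj
  · simp [hj]
  · rw [abs_pow]
    exact pow_le_pow_left₀ (abs_nonneg _) (hmin j (by simpa using hj)) _

theorem HasExponent.exists_eventually_abs_pow_le {G : (ι → ℝ) → ℝ} {α : ι → ℕ}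
    (hG : HasExponent G α) (hα : α ≠ 0) :
    ∃ K > 0, ∀ᶠ y in 𝓝 0, ∃ i, α i ≠ 0 ∧ |y i| ^ (∑ j, α j + 1) ≤ K * |G y| := by
  obtain ⟨u, hu, hu0, hGu⟩ := hG
  have hlarge : ∀ᶠ y in 𝓝 0, |u 0| / 2 < |u y| :=
    hu.continuousAt.abs.eventually_const_lt (half_lt_self (abs_pos.2 hu0))
  refine ⟨2 / |u 0|, by positivity, ?_⟩
  filter_upwards [hGu, hlarge, Metric.ball_mem_nhds (0 : ι → ℝ) one_pos] with y hGuy huy hy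
  obtain ⟨i, hi, hle⟩ := exists_abs_pow_le_abs_prod_pow hα y
  have hyi : |y i| ≤ 1 := (norm_le_pi_norm y i).trans (mem_ball_zero_iff.1 hy).le
  refine ⟨i, hi, ?_⟩
  calc |y i| ^ (∑ j, α j + 1) ≤ |y i| ^ ∑ j, α j :=
        pow_le_pow_of_le_one (abs_nonneg _) hyi (Nat.le_succ _)
    _ ≤ |∏ j, y j ^ α j| := hle
    _ ≤ |∏ j, y j ^ α j| * (2 / |u 0| * |u y|) := by
        refine le_mul_of_one_le_right (abs_nonneg _) ?_
        rw [div_mul_eq_mul_div, one_le_div (abs_pos.2 hu0)]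
        linarith
    _ = 2 / |u 0| * |G y| := by rw [hGuy, abs_mul]; ring

theorem IsNormalCrossing.hasLojasiewiczBound {G : (ι → ℝ) → ℝ} (hG : IsNormalCrossing G)
    (hG0 : G 0 = 0) : HasLojasiewiczBound (𝓝 0) G fun y => ‖fderiv ℝ G y‖ := by
  obtain ⟨α, hα⟩ := hG
  have hα0 : α ≠ 0 := by
    rintro rfl
    obtain ⟨u, -, hu0, hGu⟩ := hα
    exact hu0 (by simpa [hG0] using hGu.self_of_nhds.symm)
  obtain ⟨K, hK, hsmall⟩ := hα.exists_eventually_abs_pow_le hα0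
  have hN : 1 ≤ ∑ j, α j := by
    rw [Nat.one_le_iff_ne_zero, Ne, Finset.sum_eq_zero_iff]
    exact fun h => hα0 (funext fun j => h j (Finset.mem_univ j))
  set ζ : ℝ := ((∑ j, α j + 1 : ℕ) : ℝ)⁻¹ with hζ
  have hζ0 : 0 < ζ := by positivity
  have hζ1 : ζ ≤ 1 / 2 := by
    rw [hζ, one_div]
    exact inv_anti₀ two_pos (Nat.ofNat_le_cast.2 (Nat.succ_le_succ hN))
  refine ⟨ζ, ⟨hζ0, hζ1⟩, 2 * K ^ ζ, by positivity, ?_⟩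
  filter_upwards [hsmall, hα.eventually_abs_le_mul_norm_fderiv] with y hsmally hEuler
  rcases eq_or_ne (G y) 0 with hGy | hGy
  · rw [hGy, abs_zero, Real.zero_rpow (by linarith)]
    positivity
  obtain ⟨i, hi, hyi⟩ := hsmally
  have hyi' : |y i| ≤ K ^ ζ * |G y| ^ ζ := by
    rw [← Real.mul_rpow hK.le (abs_nonneg _),
      ← Real.pow_rpow_inv_natCast (abs_nonneg (y i)) (Nat.succ_ne_zero (∑ j, α j))]
    exact Real.rpow_le_rpow (by positivity) hyi hζ0.le
  have hGy' : 0 < |G y| := abs_pos.2 hGy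
  rw [Real.rpow_sub hGy', Real.rpow_one, div_le_iff₀ (Real.rpow_pos_of_pos hGy' _)]
  calc |G y| ≤ 2 * (‖fderiv ℝ G y‖ * |y i|) := hEuler i hi
    _ ≤ 2 * (‖fderiv ℝ G y‖ * (K ^ ζ * |G y| ^ ζ)) := by gcongr
    _ = 2 * K ^ ζ * ‖fderiv ℝ G y‖ * |G y| ^ ζ := by ring

end MonomialCase

section GradientInequality

theorem hasLojasiewiczBound_norm_fderiv_pi {ι : Type} [Fintype ι] {F : (ι → ℝ) → ℝ}
    (hF : AnalyticAt ℝ F 0) (hF0 : F 0 = 0) :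
    HasLojasiewiczBound (𝓝 0) F fun x => ‖fderiv ℝ F x‖ := by
  have hp : ∀ x, 0 ≤ ‖fderiv ℝ F x‖ := fun _ => norm_nonneg _
  by_cases hzero : ∀ᶠ x in 𝓝 0, F x = 0
  · exact .of_eventually_eq_zero hp hzero
  refine .of_forall_ultrafilter hp (hF0 ▸ hF.continuousAt.tendsto) fun 𝓤 h𝓤 => ?_
  obtain ⟨π, 𝒲, hlift, hcrossing⟩ := localUniformization ι h𝓤 hF hzero
  have hF' : AnalyticAt ℝ F (π 0) := by rwa [hlift.map_zero]
  refine (HasLojasiewiczBound.map hlift.analyticAt.contDiffAt hF'.contDiffAt hp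
    (.of_forall fun y v => (fderiv ℝ F (π y)).le_opNorm _)
    (hcrossing.hasLojasiewiczBound (by rw [hlift.map_zero, hF0]))).mono ?_
  rw [← hlift.map_eq]
  exact map_mono hlift.le_nhds

theorem hasLojasiewiczBound_norm_fderiv {E : Type*} [NormedAddCommGroup E] [NormedSpace ℝ E]
    [FiniteDimensional ℝ E] {F : E → ℝ} {x₀ : E} (hF : AnalyticAt ℝ F x₀) (hF0 : F x₀ = 0) :
    HasLojasiewiczBound (𝓝 x₀) F fun x => ‖fderiv ℝ F x‖ := by
  let L : E ≃L[ℝ] (Fin (Module.finrank ℝ E) → ℝ) :=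
    (Module.finBasis ℝ E).equivFun.toContinuousLinearEquiv
  let chart : (Fin (Module.finrank ℝ E) → ℝ) → E := fun y => L.symm y + x₀
  have hchart : AnalyticAt ℝ chart 0 :=
    ((L.symm : (Fin (Module.finrank ℝ E) → ℝ) →L[ℝ] E).analyticAt 0).add analyticAt_const
  have hchart0 : chart 0 = x₀ := by simp [chart]
  have hmap : map chart (𝓝 0) = 𝓝 x₀ := by
    rw [← hchart0]
    exact (L.symm.toHomeomorph.trans (Homeomorph.addRight x₀)).map_nhds_eq 0
  have hF' : AnalyticAt ℝ F (chart 0) := by rwa [hchart0]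
  rw [← hmap]
  exact .map hchart.contDiffAt hF'.contDiffAt (fun _ => norm_nonneg _)
    (.of_forall fun y v => (fderiv ℝ F (chart y)).le_opNorm _)
    (hasLojasiewiczBound_norm_fderiv_pi (hF'.comp hchart) ((congrArg F hchart0).trans hF0))

end GradientInequality

section CayleyTransform

variable {R : Type*} [Ring R]

theorem one_add_mul_inverse_one_sub_mem_unitary [StarRing R] {S : R} (hS : S ∈ skewAdjoint R)
    (h : IsUnit (1 - S)) : (1 + S) * Ring.inverse (1 - S) ∈ unitary R := by
  obtain ⟨b, hb⟩ := h
  have hstar : star (b : R) = 1 + S := by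
    rw [hb, star_sub, star_one, skewAdjoint.mem_iff.1 hS, sub_neg_eq_add]
  rw [← hb, Ring.inverse_unit, ← hstar, ← Units.coe_star, Units.mul_inv_mem_unitary, star_star]
  ext
  rw [Units.val_mul, Units.val_mul, Units.coe_star, hstar, hb]
  noncomm_ring

theorem sub_one_mul_inverse_add_one_mem_skewAdjoint [StarRing R] {W : R} (hW : W ∈ unitary R)
    (h : IsUnit (W + 1)) : (W - 1) * Ring.inverse (W + 1) ∈ skewAdjoint R := by
  obtain ⟨b, hb⟩ := h
  have hcross : (star W - 1) * b = -(star (b : R) * (W - 1)) := by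
    rw [hb, star_add, star_one, mul_add, add_mul, sub_mul, mul_sub, Unitary.star_mul_self_of_mem hW]
    noncomm_ring
  rw [skewAdjoint.mem_iff, ← hb, Ring.inverse_unit, star_mul, star_sub, star_one, ← Units.coe_star,
    star_inv, Units.inv_mul_eq_iff_eq_mul, ← neg_mul, ← mul_assoc, Units.eq_mul_inv_iff_mul_eq,
    hcross, Units.coe_star, mul_neg]

theorem one_add_mul_inverse_one_sub_sub_one_mul_inverse_add_one {W : R} (h2 : IsUnit (2 : R))
    (h : IsUnit (W + 1)) :
    (1 + (W - 1) * Ring.inverse (W + 1)) *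
      Ring.inverse (1 - (W - 1) * Ring.inverse (W + 1)) = W := by
  obtain ⟨b, hb⟩ := h
  have hW : W = b - 1 := by rw [hb, add_sub_cancel_right]
  have hsub : 1 - (W - 1) * ↑b⁻¹ = 2 * (↑b⁻¹ : R) := by
    calc 1 - (W - 1) * ↑b⁻¹ = b * ↑b⁻¹ - (b - 1 - 1) * ↑b⁻¹ := by rw [b.mul_inv, hW]
      _ = 2 * (↑b⁻¹ : R) := by noncomm_ring
  have hadd : 1 + (W - 1) * ↑b⁻¹ = W * (1 - (W - 1) * ↑b⁻¹) := by
    calc 1 + (W - 1) * ↑b⁻¹ = b * ↑b⁻¹ + (W - 1) * ↑b⁻¹ := by rw [b.mul_inv]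
      _ = W * (2 * ↑b⁻¹) := by rw [hb]; noncomm_ring
      _ = W * (1 - (W - 1) * ↑b⁻¹) := by rw [hsub]
  have hunit : IsUnit (1 - (W - 1) * (↑b⁻¹ : R)) := hsub ▸ h2.mul b⁻¹.isUnit
  rw [← hb, Ring.inverse_unit, hadd, mul_assoc, Ring.mul_inverse_cancel _ hunit, mul_one]

end CayleyTransform

section CayleyChart

variable {A : Type*} [NormedRing A] [NormedAlgebra ℝ A] [StarRing A] [StarModule ℝ A]
  [ContinuousStar A]

theorem coe_skewAdjointPartL_of_mem {S : A} (hS : S ∈ skewAdjoint A) :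
    (skewAdjointPartL ℝ A S : A) = S := by
  change (skewAdjointPart ℝ S : A) = S
  rw [skewAdjointPart_apply_coe, skewAdjoint.mem_iff.1 hS, sub_neg_eq_add, smul_add,
    invOf_two_smul_add_invOf_two_smul]

/-- The Cayley transform of the skew-adjoint part of `B`, translated by `U`. Projecting to the
skew-adjoint part makes it a chart of the unitary group at `U` that is defined on all of `A`. -/
noncomputable def cayleyChart (U B : A) : A :=
  U * ((1 + skewAdjointPartL ℝ A B) * Ring.inverse (1 - (skewAdjointPartL ℝ A B : A)))

theorem cayleyChart_zero (U : A) : cayleyChart U 0 = U := by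
  simp [cayleyChart]

theorem star_mul_fderiv_mem_skewAdjoint {E : Type*} [NormedAddCommGroup E] [NormedSpace ℝ E]
    {Φ : E → A} {x : E} (hΦ : DifferentiableAt ℝ Φ x) (h : ∀ᶠ y in 𝓝 x, Φ y ∈ unitary A) (v : E) :
    star (Φ x) * fderiv ℝ Φ x v ∈ skewAdjoint A := by
  have hderiv := hΦ.hasFDerivAt.hasLineDerivAt v
  have hprod : HasLineDerivAt ℝ (fun y => star (Φ y) * Φ y) _ x v :=
    HasDerivAt.fun_mul (HasDerivAt.star hderiv) hderiv
  have hconst : HasLineDerivAt ℝ (fun _ => (1 : A)) 0 x v := hasDerivAt_const 0 1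
  have hzero := hprod.unique <| hconst.congr_of_eventuallyEq <|
    h.mono fun y hy => Unitary.star_mul_self_of_mem hy
  rw [zero_smul, add_zero] at hzero
  rw [skewAdjoint.mem_iff, star_mul, star_star]
  exact eq_neg_of_add_eq_zero_left hzero

variable [CompleteSpace A]

theorem analyticAt_cayleyChart (U : A) : AnalyticAt ℝ (cayleyChart U) 0 := by
  have hskew : AnalyticAt ℝ (fun B : A => (skewAdjointPartL ℝ A B : A)) 0 :=
    ((skewAdjoint.submodule ℝ A).subtypeL.comp (skewAdjointPartL ℝ A)).analyticAt 0
  have hinv : AnalyticAt ℝ (Ring.inverse : A → A) (1 - (skewAdjointPartL ℝ A 0 : A)) := by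
    simpa using analyticAt_inverse (𝕜 := ℝ) (1 : Aˣ)
  exact analyticAt_const.mul ((analyticAt_const.add hskew).mul
    (hinv.comp (f := fun B => 1 - (skewAdjointPartL ℝ A B : A)) (analyticAt_const.sub hskew)))

theorem eventually_cayleyChart_mem_unitary {U : A} (hU : U ∈ unitary A) :
    ∀ᶠ B in 𝓝 0, cayleyChart U B ∈ unitary A := by
  have hlim : Tendsto (fun B : A => 1 - (skewAdjointPartL ℝ A B : A)) (𝓝 0) (𝓝 1) := by
    have hcont : Continuous fun B : A => 1 - (skewAdjointPartL ℝ A B : A) := by fun_prop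
    simpa using hcont.tendsto 0
  filter_upwards [hlim.eventually (Units.nhds (1 : Aˣ))] with B hB
  exact mul_mem hU
    (one_add_mul_inverse_one_sub_mem_unitary (skewAdjointPartL ℝ A B).2 hB)

theorem nhdsWithin_unitary_le_map_cayleyChart {U : A} (hU : U ∈ unitary A) :
    𝓝[unitary A] U ≤ map (cayleyChart U) (𝓝 0) := by
  have h2 : IsUnit (2 : A) := by
    simpa only [map_ofNat] using (IsUnit.mk0 (2 : ℝ) two_ne_zero).map (algebraMap ℝ A)
  have hlim : ∀ c : A, Tendsto (fun V => star U * V + c) (𝓝[unitary A] U) (𝓝 (1 + c)) := by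
    intro c
    have hcont : Continuous fun V : A => star U * V + c := by fun_prop
    simpa only [Unitary.star_mul_self_of_mem hU] using
      (hcont.tendsto U).mono_left (nhdsWithin_le_nhds (s := (unitary A : Set A)))
  have ⟨u, hu⟩ := h2
  have hunit : ∀ᶠ V in 𝓝[unitary A] U, IsUnit (star U * V + 1) :=
    (hlim 1).eventually <| by
      rw [one_add_one_eq_two, ← hu]
      exact Units.nhds u
  let ψ : A → A := fun V => (star U * V - 1) * Ring.inverse (star U * V + 1)
  have hψ : Tendsto ψ (𝓝[unitary A] U) (𝓝 0) := by
    have hinv : ContinuousAt Ring.inverse (1 + 1 : A) := by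
      simpa only [one_add_one_eq_two, hu] using NormedRing.inverse_continuousAt u
    simpa [ψ, sub_eq_add_neg] using (hlim (-1)).mul (hinv.tendsto.comp (hlim 1))
  have hsection : ∀ᶠ V in 𝓝[unitary A] U, cayleyChart U (ψ V) = V := by
    filter_upwards [hunit, self_mem_nhdsWithin] with V hV hVU
    have hskew := sub_one_mul_inverse_add_one_mem_skewAdjoint
      (mul_mem (Unitary.star_mem hU) hVU) hV
    rw [cayleyChart, coe_skewAdjointPartL_of_mem (S := ψ V) hskew,
      one_add_mul_inverse_one_sub_sub_one_mul_inverse_add_one h2 hV, ← mul_assoc,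
      Unitary.mul_star_self_of_mem hU, one_mul]
  calc 𝓝[unitary A] U = map (fun V => cayleyChart U (ψ V)) (𝓝[unitary A] U) :=
        map_id.symm.trans (map_congr (hsection.mono fun V hV => hV.symm))
    _ = map (cayleyChart U) (map ψ (𝓝[unitary A] U)) := Filter.map_map.symm
    _ ≤ map (cayleyChart U) (𝓝 0) := map_mono hψ

end CayleyChart

section UnitaryGroup

open scoped Matrix.Norms.Frobenius

variable {n : ℕ}

theorem frobC_eq_norm (A : Matrix (Fin n) (Fin n) ℂ) : frobC A = ‖A‖ := by
  simp only [frobenius_norm_def, frobC, Real.sqrt_eq_rpow, Complex.normSq_eq_norm_sq,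
    Real.rpow_ofNat]

theorem sum_re_conj_mul_eq_re_trace (P Z : Matrix (Fin n) (Fin n) ℂ) :
    ∑ i, ∑ j, ((starRingEnd ℂ) (P i j) * Z i j).re = (trace (Pᴴ * Z)).re := by
  simp only [trace, diag_apply, mul_apply, conjTranspose_apply, Complex.re_sum]
  exact Finset.sum_comm

theorem abs_re_trace_conjTranspose_mul_le (P Z : Matrix (Fin n) (Fin n) ℂ) :
    |(trace (Pᴴ * Z)).re| ≤ frobC P * frobC Z := by
  rw [← sum_re_conj_mul_eq_re_trace, ← Fintype.sum_prod_type']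
  calc |∑ p : Fin n × Fin n, ((starRingEnd ℂ) (P p.1 p.2) * Z p.1 p.2).re|
      ≤ ∑ p : Fin n × Fin n, ‖P p.1 p.2‖ * ‖Z p.1 p.2‖ := by
        refine (Finset.abs_sum_le_sum_abs _ _).trans (Finset.sum_le_sum fun p _ => ?_)
        simpa only [norm_mul, RCLike.norm_conj] using
          Complex.abs_re_le_norm ((starRingEnd ℂ) (P p.1 p.2) * Z p.1 p.2)
    _ ≤ √(∑ p : Fin n × Fin n, ‖P p.1 p.2‖ ^ 2) * √(∑ p : Fin n × Fin n, ‖Z p.1 p.2‖ ^ 2) :=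
        Real.sum_mul_le_sqrt_mul_sqrt _ _ _
    _ = frobC P * frobC Z := by
        simp only [frobC, Complex.normSq_eq_norm_sq, Fintype.sum_prod_type]

theorem re_trace_mul_of_mem_skewAdjoint (Λ : Matrix (Fin n) (Fin n) ℂ)
    {S : Matrix (Fin n) (Fin n) ℂ} (hS : S ∈ skewAdjoint (Matrix (Fin n) (Fin n) ℂ)) :
    (trace (Λ * S)).re = -(trace (Λᴴ * S)).re := by
  have hSH : Sᴴ = -S := skewAdjoint.mem_iff.1 hS
  calc (trace (Λ * S)).re = (trace (Λ * S)ᴴ).re := by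
        rw [trace_conjTranspose, Complex.star_def, Complex.conj_re]
    _ = -(trace (Λᴴ * S)).re := by
        rw [conjTranspose_mul, hSH, neg_mul, trace_neg, trace_mul_comm, Complex.neg_re]

theorem re_trace_projGradC_conjTranspose_mul
    (g : Matrix (Fin n) (Fin n) ℂ → Matrix (Fin n) (Fin n) ℂ) {W Z : Matrix (Fin n) (Fin n) ℂ}
    (hW : W ∈ unitaryGroup (Fin n) ℂ) (hZ : Wᴴ * Z ∈ skewAdjoint (Matrix (Fin n) (Fin n) ℂ)) :
    (trace ((projGradC g W)ᴴ * Z)).re = (trace ((g W)ᴴ * Z)).re := by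
  have hgrad : (Wᴴ * g W)ᴴ * (Wᴴ * Z) = (g W)ᴴ * Z := by
    rw [conjTranspose_mul, conjTranspose_conjTranspose, mul_assoc, ← mul_assoc W,
      ← star_eq_conjTranspose W, mem_unitaryGroup_iff.1 hW, one_mul]
  have hproj : (projGradC g W)ᴴ * Z =
      (1 / 2 : ℝ) • ((Wᴴ * g W)ᴴ * (Wᴴ * Z) - Wᴴ * g W * (Wᴴ * Z)) := by
    rw [projGradC, conjTranspose_mul, conjTranspose_smul, conjTranspose_sub,
      conjTranspose_conjTranspose, mul_assoc, smul_mul_assoc, sub_mul, ← Complex.coe_smul]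
    simp
  rw [hproj, trace_smul, trace_sub, Complex.smul_re, Complex.sub_re,
    re_trace_mul_of_mem_skewAdjoint (Wᴴ * g W) hZ, hgrad, smul_eq_mul]
  ring

theorem IsGradC.fderiv_apply {f : Matrix (Fin n) (Fin n) ℂ → ℝ}
    {g : Matrix (Fin n) (Fin n) ℂ → Matrix (Fin n) (Fin n) ℂ} (hg : IsGradC f g)
    {W : Matrix (Fin n) (Fin n) ℂ} (hf : DifferentiableAt ℝ f W) (Z : Matrix (Fin n) (Fin n) ℂ) :
    fderiv ℝ f W Z = (trace ((g W)ᴴ * Z)).re := by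
  rw [← sum_re_conj_mul_eq_re_trace]
  exact (hf.hasFDerivAt.hasLineDerivAt Z).unique (hg W Z)

theorem IsGradC.abs_fderiv_le {f : Matrix (Fin n) (Fin n) ℂ → ℝ}
    {g : Matrix (Fin n) (Fin n) ℂ → Matrix (Fin n) (Fin n) ℂ} (hg : IsGradC f g)
    {W Z : Matrix (Fin n) (Fin n) ℂ} (hf : DifferentiableAt ℝ f W)
    (hW : W ∈ unitaryGroup (Fin n) ℂ) (hZ : Wᴴ * Z ∈ skewAdjoint (Matrix (Fin n) (Fin n) ℂ)) :
    |fderiv ℝ f W Z| ≤ frobC (projGradC g W) * ‖Z‖ := by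
  rw [hg.fderiv_apply hf, ← re_trace_projGradC_conjTranspose_mul g hW hZ, ← frobC_eq_norm]
  exact abs_re_trace_conjTranspose_mul_le _ _

theorem analyticAt_of_analyticAt_comp_of {f : Matrix (Fin n) (Fin n) ℂ → ℝ}
    {U : Matrix (Fin n) (Fin n) ℂ}
    (hf : AnalyticAt ℝ (fun x : Fin n → Fin n → ℂ => f (Matrix.of x)) (Matrix.of.symm U)) :
    AnalyticAt ℝ f U :=
  let L : Matrix (Fin n) (Fin n) ℂ →L[ℝ] Fin n → Fin n → ℂ :=
    LinearMap.toContinuousLinearMap (E := Matrix (Fin n) (Fin n) ℂ)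
      (Matrix.ofLinearEquiv ℝ).symm.toLinearMap
  AnalyticAt.comp (f := L) hf (L.analyticAt U)

theorem hasLojasiewiczBound_projGradC {f : Matrix (Fin n) (Fin n) ℂ → ℝ}
    {g : Matrix (Fin n) (Fin n) ℂ → Matrix (Fin n) (Fin n) ℂ} {U : Matrix (Fin n) (Fin n) ℂ}
    (hf : AnalyticAt ℝ f U) (hg : IsGradC f g) (hU : U ∈ unitaryGroup (Fin n) ℂ) :
    HasLojasiewiczBound (𝓝[unitaryGroup (Fin n) ℂ] U) (fun W => f W - f U)
      fun W => frobC (projGradC g W) := by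
  have hchart := analyticAt_cayleyChart U
  rw [← cayleyChart_zero U] at hf
  have hF : AnalyticAt ℝ (fun W => f W - f U) (cayleyChart U 0) := hf.sub analyticAt_const
  refine (HasLojasiewiczBound.map hchart.contDiffAt hF.contDiffAt (fun _ => Real.sqrt_nonneg _) ?_
    (hasLojasiewiczBound_norm_fderiv (hF.comp hchart)
      (sub_eq_zero.2 (congrArg f (cayleyChart_zero U))))).mono
    (nhdsWithin_unitary_le_map_cayleyChart hU)
  filter_upwards [hchart.eventually_analyticAt,
    hchart.continuousAt.eventually hf.eventually_analyticAt,
    (eventually_cayleyChart_mem_unitary hU).eventually_nhds] with B hB hfB hmem v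
  rw [fderiv_sub_const]
  exact hg.abs_fderiv_le hfB.differentiableAt hmem.self_of_nhds
    (star_mul_fderiv_mem_skewAdjoint hB.differentiableAt hmem v)

theorem lojasiewicz_projGrad_unitary_general
    (f : Matrix (Fin n) (Fin n) ℂ → ℝ)
    (g : Matrix (Fin n) (Fin n) ℂ → Matrix (Fin n) (Fin n) ℂ)
    (U : Matrix (Fin n) (Fin n) ℂ)
    (hf : AnalyticAt ℝ (fun x : Fin n → Fin n → ℂ => f (Matrix.of x)) (Matrix.of.symm U))
    (hg : IsGradC f g) (hU : Uᴴ * U = 1) :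
    ∃ δ > (0 : ℝ), ∃ σ > (0 : ℝ), ∃ ζ : ℝ, ζ ∈ Set.Ioc (0 : ℝ) (1 / 2) ∧
      ∀ U' : Matrix (Fin n) (Fin n) ℂ, U'ᴴ * U' = 1 → frobC (U' - U) < δ →
        |f U' - f U| ^ (1 - ζ) ≤ σ * frobC (projGradC g U') := by
  obtain ⟨ζ, hζ, σ, hσ, hbound⟩ := hasLojasiewiczBound_projGradC
    (analyticAt_of_analyticAt_comp_of hf) hg (mem_unitaryGroup_iff'.2 hU)
  obtain ⟨δ, hδ, hball⟩ := Metric.mem_nhdsWithin_iff.1 hbound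
  refine ⟨δ, hδ, σ, hσ, ζ, hζ, fun W hW hdist => hball ⟨?_, mem_unitaryGroup_iff'.2 hW⟩⟩
  rwa [Metric.mem_ball, dist_eq_norm, ← frobC_eq_norm]

end UnitaryGroup

/-- Łojasiewicz inequality for the projected gradient on the unitary group:
if `f : ℂ^{n×n} → ℝ` is real analytic in the real and imaginary parts of the entries,
then every `U ∈ U(n)` admits `δ > 0`, `σ > 0` and `ζ ∈ (0, 1/2]` such that
`|f(U') − f(U)|^{1−ζ} ≤ σ ‖ProjGrad f(U')‖` for all unitary `U'` with `‖U' − U‖ < δ`. -/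
theorem lojasiewicz_projGrad_unitary {n : ℕ}
    (f : Matrix (Fin n) (Fin n) ℂ → ℝ)
    (g : Matrix (Fin n) (Fin n) ℂ → Matrix (Fin n) (Fin n) ℂ)
    (hf : AnalyticOnNhd ℝ (fun x : Fin n → Fin n → ℂ => f (Matrix.of x)) Set.univ)
    (hg : IsGradC f g)
    (U : Matrix (Fin n) (Fin n) ℂ) (hU : Uᴴ * U = 1) :
    ∃ δ > (0 : ℝ), ∃ σ > (0 : ℝ), ∃ ζ : ℝ, ζ ∈ Set.Ioc (0 : ℝ) (1 / 2) ∧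
      ∀ U' : Matrix (Fin n) (Fin n) ℂ, U'ᴴ * U' = 1 → frobC (U' - U) < δ →
        |f U' - f U| ^ (1 - ζ) ≤ σ * frobC (projGradC g U') := by
  exact lojasiewicz_projGrad_unitary_general f g U (hf _ (Set.mem_univ _)) hg hU
end

section
/- Let n ≥ 2, let f: ℝ^{n×n} → ℝ be differentiable, and let Q ∈ O(n). Then there exists a pair of indices 1 ≤ i < j ≤ n such that |(h^{ij}_Q)'(0)| ≥ (2/n) ‖ProjGrad f(Q)‖. -/
open Matrix BigOperators Filter

/-- Frobenius norm of a real matrix. -/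
noncomputable def frobR {n : ℕ} (A : Matrix (Fin n) (Fin n) ℝ) : ℝ :=
  Real.sqrt (∑ i, ∑ j, (A i j) ^ 2)

/-- `g` is the Euclidean gradient of `f : ℝ^{n×n} → ℝ`. -/
def IsGradR {n : ℕ} (f : Matrix (Fin n) (Fin n) ℝ → ℝ)
    (g : Matrix (Fin n) (Fin n) ℝ → Matrix (Fin n) (Fin n) ℝ) : Prop :=
  ∀ Q H, HasDerivAt (fun t : ℝ => f (Q + t • H)) (∑ i, ∑ j, g Q i j * H i j) 0

/-- Riemannian (projected) gradient on O(n): `Q (Λ - Λᵀ)/2` with `Λ = Qᵀ ∇f(Q)`. -/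
noncomputable def projGradR {n : ℕ}
    (g : Matrix (Fin n) (Fin n) ℝ → Matrix (Fin n) (Fin n) ℝ)
    (Q : Matrix (Fin n) (Fin n) ℝ) : Matrix (Fin n) (Fin n) ℝ :=
  Q * ((1 / 2 : ℝ) • (Qᵀ * g Q - (Qᵀ * g Q)ᵀ))

/-- Givens rotation `G(i,j,θ)`: identity except `G_{ii} = G_{jj} = cos θ`,
`G_{ij} = −sin θ`, `G_{ji} = sin θ`. -/
noncomputable def givensR (n : ℕ) (i j : Fin n) (θ : ℝ) : Matrix (Fin n) (Fin n) ℝ :=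
  fun a b =>
    if a = i ∧ b = i then Real.cos θ
    else if a = j ∧ b = j then Real.cos θ
    else if a = i ∧ b = j then -Real.sin θ
    else if a = j ∧ b = i then Real.sin θ
    else if a = b then 1 else 0

/-! Since `G(i,j,θ) = 1 + θ (E_ji - E_ij) + o(θ)`, the chain rule gives
`(h^{ij}_Q)'(0) = ⟨∇f(Q), Q (E_ji - E_ij)⟩ = ⟨Λ, E_ji - E_ij⟩ = 2 S_ji`, where `Λ = Qᵀ ∇f(Q)` and
`S` is the skew-symmetric part of `Λ`. The matrix `S` vanishes on the diagonal, so its largest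
squared entry is at least `‖S‖² / (n (n - 1))`, the average over the off-diagonal entries; and
`‖S‖ = ‖Q S‖ = ‖ProjGrad f(Q)‖` because `Q` is orthogonal. -/

/-- The skew-symmetric part `(A - Aᵀ)/2` of a real square matrix, so that
`ProjGrad f(Q) = Q * skewPart (Qᵀ * ∇f(Q))`. -/
noncomputable def skewPart {ι : Type*} (A : Matrix ι ι ℝ) : Matrix ι ι ℝ :=
  (1 / 2 : ℝ) • (A - Aᵀ)

theorem transpose_skewPart {ι : Type*} (A : Matrix ι ι ℝ) : (skewPart A)ᵀ = -skewPart A := by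
  simp [skewPart, ← smul_neg]

theorem two_mul_skewPart_apply {ι : Type*} (A : Matrix ι ι ℝ) (i j : ι) :
    2 * skewPart A i j = A i j - A j i := by
  simp [skewPart]

theorem sum_mul_mul_apply {l m n R : Type*} [Fintype l] [Fintype m] [Fintype n]
    [CommSemiring R] (G : Matrix l n R) (Q : Matrix l m R) (X : Matrix m n R) :
    ∑ a, ∑ b, G a b * (Q * X) a b = ∑ a, ∑ b, (Qᵀ * G) a b * X a b := by
  simp only [← hadamard_apply, sum_hadamard_eq]
  rw [transpose_mul, ← Matrix.mul_assoc, trace_mul_comm, Matrix.mul_assoc]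

theorem frobR_mul_of_transpose_mul_self_eq_one {n : ℕ} {Q : Matrix (Fin n) (Fin n) ℝ}
    (hQ : Qᵀ * Q = 1) (A : Matrix (Fin n) (Fin n) ℝ) : frobR (Q * A) = frobR A := by
  simp only [frobR, sq, sum_mul_mul_apply, ← Matrix.mul_assoc, hQ, Matrix.one_mul]

theorem frobR_projGradR {n : ℕ} {Q : Matrix (Fin n) (Fin n) ℝ} (hQ : Qᵀ * Q = 1)
    (g : Matrix (Fin n) (Fin n) ℝ → Matrix (Fin n) (Fin n) ℝ) :
    frobR (projGradR g Q) = frobR (skewPart (Qᵀ * g Q)) :=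
  frobR_mul_of_transpose_mul_self_eq_one hQ _

theorem exists_ne_sum_sq_le_of_diag_eq_zero {ι : Type*} [Fintype ι] [Nontrivial ι]
    {A : Matrix ι ι ℝ} (hA : A.diag = 0) :
    ∃ i j, i ≠ j ∧ ∑ a, ∑ b, A a b ^ 2 ≤
      Fintype.card ι * (Fintype.card ι - 1) * A i j ^ 2 := by
  classical
  set N : ℝ := Fintype.card ι * (Fintype.card ι - 1)
  have hcard : ((Finset.univ : Finset ι).offDiag.card : ℝ) = N := by
    rw [Finset.offDiag_card, Nat.cast_sub (Nat.le_mul_self _)]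
    simp only [Finset.card_univ, Nat.cast_mul, N]
    ring
  have hoff : ∑ a, ∑ b, A a b ^ 2 = ∑ p ∈ Finset.univ.offDiag, A p.1 p.2 ^ 2 := by
    rw [← Finset.sum_product', ← Finset.diag_union_offDiag,
      Finset.sum_union (Finset.disjoint_diag_offDiag _), Finset.sum_diag]
    simp [← diag_apply, hA]
  obtain ⟨x, y, hxy⟩ := exists_pair_ne ι
  have hne : (Finset.univ : Finset ι).offDiag.Nonempty := ⟨(x, y), by simpa using hxy⟩
  obtain ⟨⟨i, j⟩, hij, hle⟩ : ∃ p ∈ Finset.univ.offDiag,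
      ∑ a, ∑ b, A a b ^ 2 ≤ N * A p.1 p.2 ^ 2 := by
    refine Finset.exists_le_of_sum_le hne ?_
    rw [Finset.sum_const, nsmul_eq_mul, hcard, ← Finset.mul_sum, hoff]
  exact ⟨i, j, by simpa using hij, hle⟩

theorem exists_lt_frobR_le_of_transpose_eq_neg {n : ℕ} (hn : 2 ≤ n)
    {A : Matrix (Fin n) (Fin n) ℝ} (hA : Aᵀ = -A) :
    ∃ i j, i < j ∧ frobR A ≤ √(n * (n - 1)) * |A j i| := by
  have hskew (i j) : A i j = -A j i := congrFun₂ hA j i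
  have hdiag : A.diag = 0 := funext fun i => self_eq_neg.mp (hskew i i)
  have : Nontrivial (Fin n) := Fin.nontrivial_iff_two_le.mpr hn
  obtain ⟨i, j, hij, hle⟩ := exists_ne_sum_sq_le_of_diag_eq_zero hdiag
  have hfrob : frobR A ≤ √(n * (n - 1)) * |A i j| := by
    rw [← Real.sqrt_sq_eq_abs, ← Real.sqrt_mul' _ (sq_nonneg _)]
    exact Real.sqrt_le_sqrt (by simpa using hle)
  rcases lt_or_gt_of_ne hij with h | h
  · exact ⟨i, j, h, by rwa [hskew j i, abs_neg]⟩
  · exact ⟨j, i, h, hfrob⟩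

/-- The infinitesimal generator `E_ji - E_ij` of the rotations `G(i,j,θ)`, that is, their
derivative at `θ = 0`. -/
def givensGenerator {n : ℕ} (i j : Fin n) : Matrix (Fin n) (Fin n) ℝ :=
  single j i 1 - single i j 1

theorem sum_mul_givensGenerator {n : ℕ} (A : Matrix (Fin n) (Fin n) ℝ) (i j : Fin n) :
    ∑ a, ∑ b, A a b * givensGenerator i j a b = 2 * skewPart A j i := by
  simp [two_mul_skewPart_apply, givensGenerator, mul_sub, single_apply, ite_and]

theorem givensR_eq_one_add {n : ℕ} {i j : Fin n} (hij : i ≠ j) (θ : ℝ) :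
    givensR n i j θ = 1 + (Real.cos θ - 1) • (single i i 1 + single j j 1) +
      Real.sin θ • givensGenerator i j := by
  ext a b
  simp only [givensR, givensGenerator, Matrix.add_apply, Matrix.sub_apply, Matrix.smul_apply,
    single_apply, one_apply, smul_eq_mul]
  grind

theorem hasDerivAt_comp_of_hasLineDerivAt {𝕜 E F : Type*} [NontriviallyNormedField 𝕜]
    [NormedAddCommGroup E] [NormedSpace 𝕜 E] [NormedAddCommGroup F] [NormedSpace 𝕜 F]
    {f : E → F} {γ : 𝕜 → E} {t : 𝕜} {f' : F} {v : E} (hf : DifferentiableAt 𝕜 f (γ t))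
    (hf' : HasLineDerivAt 𝕜 f f' (γ t) v) (hγ : HasDerivAt γ v t) :
    HasDerivAt (fun s => f (γ s)) f' t := by
  rw [hf'.unique (hf.hasFDerivAt.hasLineDerivAt v)]
  exact hf.hasFDerivAt.comp_hasDerivAt t hγ

section Derivative

-- The calculus lemmas ask for a norm; the statements only see the topology on matrices.
open scoped Matrix.Norms.Elementwise

variable {n : ℕ} {i j : Fin n}

theorem hasDerivAt_givensR (hij : i ≠ j) :
    HasDerivAt (givensR n i j) (givensGenerator i j) 0 := by
  have hcos := ((Real.hasDerivAt_cos 0).sub_const 1).smul_const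
    (single i i (1 : ℝ) + single j j 1)
  have hsin := (Real.hasDerivAt_sin 0).smul_const (givensGenerator i j)
  have hsum := (hcos.const_add 1).fun_add hsin
  simp only [Real.sin_zero, neg_zero, zero_smul, zero_add, Real.cos_zero, one_smul] at hsum
  rwa [funext (givensR_eq_one_add hij)]

theorem hasDerivAt_comp_mul_givensR {m : Type*} [Fintype m]
    {f : Matrix m (Fin n) ℝ → ℝ} {Q G : Matrix m (Fin n) ℝ}
    (hf : DifferentiableAt ℝ f Q) (hG : ∀ H, HasLineDerivAt ℝ f (∑ a, ∑ b, G a b * H a b) Q H)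
    (hij : i ≠ j) :
    HasDerivAt (fun θ => f (Q * givensR n i j θ)) (2 * skewPart (Qᵀ * G) j i) 0 := by
  have hcurve : HasDerivAt (fun θ => Q * givensR n i j θ) (Q * givensGenerator i j) 0 :=
    (mulLeftLinearMap (Fin n) ℝ Q).toContinuousLinearMap.hasFDerivAt.comp_hasDerivAt 0
      (hasDerivAt_givensR hij)
  have hQ : Q * givensR n i j 0 = Q := by simp [givensR_eq_one_add hij]
  rw [← sum_mul_givensGenerator, ← sum_mul_mul_apply]
  exact hasDerivAt_comp_of_hasLineDerivAt (hQ.symm ▸ hf) (hQ.symm ▸ hG _) hcurve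

end Derivative

theorem sqrt_mul_sub_one_pos {x : ℝ} (hx : 1 < x) : 0 < √(x * (x - 1)) :=
  Real.sqrt_pos.mpr (mul_pos (zero_lt_one.trans hx) (sub_pos.mpr hx))

theorem sqrt_mul_sub_one_le {x : ℝ} (hx : 0 ≤ x) : √(x * (x - 1)) ≤ x :=
  Real.sqrt_le_iff.mpr ⟨hx, by nlinarith⟩

theorem exists_pair_gradient_aligned_general {m : Type*} [Fintype m] {n : ℕ} (hn : 2 ≤ n)
    {f : Matrix m (Fin n) ℝ → ℝ} {Q G : Matrix m (Fin n) ℝ} (hf : DifferentiableAt ℝ f Q)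
    (hG : ∀ H, HasLineDerivAt ℝ f (∑ a, ∑ b, G a b * H a b) Q H) :
    ∃ i j : Fin n, i < j ∧ 2 / √(n * (n - 1)) * frobR (skewPart (Qᵀ * G)) ≤
      |deriv (fun θ => f (Q * givensR n i j θ)) 0| := by
  obtain ⟨i, j, hij, hle⟩ := exists_lt_frobR_le_of_transpose_eq_neg hn
    (transpose_skewPart (Qᵀ * G))
  have hpos : 0 < √((n : ℝ) * (n - 1)) := sqrt_mul_sub_one_pos (mod_cast hn)
  refine ⟨i, j, hij, ?_⟩
  calc 2 / √(n * (n - 1)) * frobR (skewPart (Qᵀ * G))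
      ≤ 2 / √(n * (n - 1)) * (√(n * (n - 1)) * |skewPart (Qᵀ * G) j i|) := by gcongr
    _ = |2 * skewPart (Qᵀ * G) j i| := by
      rw [abs_mul, abs_two, ← mul_assoc, div_mul_cancel₀ _ hpos.ne']
    _ = |deriv (fun θ => f (Q * givensR n i j θ)) 0| := by
      rw [(hasDerivAt_comp_mul_givensR hf hG hij.ne).deriv]

/-- For `n ≥ 2`, `f` differentiable and `Q ∈ O(n)`, there exists a pair `i < j` with
`|(h^{ij}_Q)'(0)| ≥ (2/n) ‖ProjGrad f(Q)‖`, where `h^{ij}_Q(θ) = f(Q G(i,j,θ))`. -/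
theorem exists_pair_gradient_aligned {n : ℕ} (hn : 2 ≤ n)
    (f : Matrix (Fin n) (Fin n) ℝ → ℝ)
    (g : Matrix (Fin n) (Fin n) ℝ → Matrix (Fin n) (Fin n) ℝ)
    (hdiff : Differentiable ℝ (fun x : Fin n → Fin n → ℝ => f (Matrix.of x)))
    (hg : IsGradR f g)
    (Q : Matrix (Fin n) (Fin n) ℝ) (hQ : Qᵀ * Q = 1) :
    ∃ i j : Fin n, i < j ∧
      (2 / (n : ℝ)) * frobR (projGradR g Q) ≤
        |deriv (fun θ : ℝ => f (Q * givensR n i j θ)) 0| := by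
  obtain ⟨i, j, hij, hle⟩ := exists_pair_gradient_aligned_general hn (hdiff Q) (hg Q)
  refine ⟨i, j, hij, le_trans ?_ hle⟩
  rw [frobR_projGradR hQ]
  gcongr
  · exact Real.sqrt_nonneg _
  · exact sqrt_mul_sub_one_pos (mod_cast hn)
  · exact sqrt_mul_sub_one_le n.cast_nonneg
end
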